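/- Let m be a positive integer and Z = mP_1 + ... + mP_s a set of s non-degenerate equimultiple fat points in P^n (the points span P^n). If s ≤ n+3, then reg(Z) = T(Z), where T(Z) = max{T_j(Z) : j=1,...,n} with T_j(Z) = max{⌊(mq + j - 2)/j⌋ : some q of the points lie on a j-dimensional linear subspace}. -/

import Mathlib

open MvPolynomial

noncomputable section

/-- The defining prime ideal of the point of projective space with homogeneous
coordinates `p`: the ideal generated by the linear forms vanishing at `p`. -/
def pointIdeal {K : Type} [Field K] {N : ℕ} (p : Fin N → K) :
    Ideal (MvPolynomial (Fin N) K) :=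
  Ideal.span {f | f.IsHomogeneous 1 ∧ eval p f = 0}

/-- The ideal of the fat point scheme `m₁P₁ + ⋯ + m_sP_s`. -/
def fatIdeal {K : Type} [Field K] {N s : ℕ} (p : Fin s → Fin N → K) (m : Fin s → ℕ) :
    Ideal (MvPolynomial (Fin N) K) :=
  ⨅ i, pointIdeal (p i) ^ (m i)

/-- `dim_K` of the degree-`t` graded piece of the ideal `I`. -/
def gradedDim (K : Type) [Field K] {N : ℕ} (I : Ideal (MvPolynomial (Fin N) K)) (t : ℕ) : ℕ :=
  Module.finrank K ↥(homogeneousSubmodule (Fin N) K t ⊓ I.restrictScalars K)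

/-- The Hilbert function of `R/I` in degree `t`. -/
def hilbFn (K : Type) [Field K] {N : ℕ} (I : Ideal (MvPolynomial (Fin N) K)) (t : ℕ) : ℕ :=
  Module.finrank K ↥(homogeneousSubmodule (Fin N) K t) - gradedDim K I t

/-- The regularity index of `R/I` relative to the multiplicity `e`:
the least `t` with `H_{R/I}(t) = e`. -/
def regIndex (K : Type) [Field K] {N : ℕ} (I : Ideal (MvPolynomial (Fin N) K)) (e : ℕ) : ℕ :=
  sInf {t | hilbFn K I t = e}

/-- The multiplicity `e(R/I) = ∑ C(mᵢ+n-1, n)` of a fat point scheme in `ℙⁿ`. -/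
def fatMult (n : ℕ) {s : ℕ} (m : Fin s → ℕ) : ℕ :=
  ∑ i, (m i + n - 1).choose n

/-- The regularity index of the fat point scheme `m₁P₁ + ⋯ + m_sP_s` in `ℙⁿ`. -/
def regFat (K : Type) [Field K] {n s : ℕ} (p : Fin s → Fin (n + 1) → K) (m : Fin s → ℕ) : ℕ :=
  regIndex K (fatIdeal p m) (fatMult n m)

/-- The coordinate vectors `p i` represent distinct points of projective space. -/
def ProjDistinct {K : Type} [Field K] {N s : ℕ} (p : Fin s → Fin N → K) : Prop :=
  (∀ i, p i ≠ 0) ∧ ∀ i j, i ≠ j → ∀ c : K, p i ≠ c • p j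

/-- The points `p i`, `i ∈ Q`, lie on a `j`-dimensional linear subspace of `ℙⁿ`. -/
def OnLinearSubspace {K : Type} [Field K] {N s : ℕ} (p : Fin s → Fin N → K)
    (Q : Finset (Fin s)) (j : ℕ) : Prop :=
  ∃ W : Submodule K (Fin N → K), Module.finrank K ↥W ≤ j + 1 ∧ ∀ i ∈ Q, p i ∈ W

open Classical in
/-- The Segre bound `T(Z) = max {T_j(Z) | j = 1,…,n}` for fat points in `ℙⁿ`. -/
def segreBound {K : Type} [Field K] (n : ℕ) {s : ℕ} (p : Fin s → Fin (n + 1) → K)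
    (m : Fin s → ℕ) : ℕ :=
  (Finset.Icc 1 n).sup fun j =>
    Finset.univ.powerset.sup fun Q =>
      if Q.Nonempty ∧ OnLinearSubspace p Q j then (∑ i ∈ Q, m i + j - 2) / j else 0

/-- The standard coordinate point `(1,0,…,0)`. -/
def stdPt (K : Type) [Field K] (N : ℕ) : Fin N → K := fun j => if (j : ℕ) = 0 then 1 else 0

/-!
The Hilbert function has reached the multiplicity in degree `t` exactly when arbitrary jets of
orders `mᵢ` at the points are jets of a single form of degree `t`.

For the upper bound, a form with a prescribed jet at one point and vanishing to order `mᵢ` at the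
others is built as a sum of products of `t` linear forms, at most `t - mᵢ` of which are nonzero at
the `i`-th point. The bookkeeping is dual: the coefficients of the linear relations between the
points are functionals on a space of dimension `s - (n + 1) ≤ 2`, weighted by these numbers of
factors still available. The Segre inequalities say that the functionals not vanishing on a
subspace carry enough weight. They persist when the weights are lowered by one on a suitable basis
of functionals; the points outside it are then a basis of `Kⁿ⁺¹`, whose coordinate forms provide the
next linear factor.

For the lower bound, restriction to the span of the points under consideration reduces the claim to
`m s ≤ n t + 1`. For `m, n ≥ 2` this follows from the inequality `2 m ≤ t + 1` for two points unless
`s = n + 2 = 4` or `s = n + 3 ≤ 7`. Four points of the plane are settled by a dimension count. If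
`s = n + 3`, either a rational normal curve passes through the points, or all but two of them lie on
a hyperplane; in the latter case a dimension count in the hyperplane suffices, except for seven
double points in `ℙ⁴` and cubics.
-/

section LinearForms

variable {K : Type} [Field K] {N M : ℕ}

/-- The linear form `∑ l(eₖ) Xₖ` with coefficients those of the functional `l` on `Kᴺ`. -/
def linForm : Module.Dual K (Fin N → K) →ₗ[K] MvPolynomial (Fin N) K :=
  Fintype.linearCombination K X ∘ₗ LinearMap.pi fun k => Module.Dual.eval K _ (Pi.single k 1)

lemma linForm_apply (l : Module.Dual K (Fin N → K)) :
    linForm l = ∑ k, l (Pi.single k 1) • (X k : MvPolynomial (Fin N) K) := rfl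

lemma linForm_proj (k : Fin N) : linForm (LinearMap.proj k : Module.Dual K (Fin N → K)) = X k := by
  simp [linForm_apply, Pi.single_apply, ite_smul]

lemma isHomogeneous_linForm (l : Module.Dual K (Fin N → K)) : (linForm l).IsHomogeneous 1 :=
  IsHomogeneous.sum _ _ _ fun k _ => (homogeneousSubmodule _ K 1).smul_mem _ (isHomogeneous_X K k)

lemma apply_eq_sum_single (l : Module.Dual K (Fin N → K)) (z : Fin N → K) :
    l z = ∑ k, z k * l (Pi.single k 1) := by
  simpa using congrArg l (pi_eq_sum_univ' z)

lemma eval_linForm (l : Module.Dual K (Fin N → K)) (z : Fin N → K) :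
    eval z (linForm l) = l z := by
  rw [linForm_apply, apply_eq_sum_single]
  simp [smul_eval, mul_comm]

lemma exists_linForm_eq {F : MvPolynomial (Fin N) K} (hF : F.IsHomogeneous 1) :
    ∃ l, linForm l = F := by
  have hspan : F ∈ Submodule.span K (Set.range X) := by
    rwa [← homogeneousSubmodule_one_eq_span_X]
  have hle : Submodule.span K (Set.range X) ≤ LinearMap.range (linForm (K := K) (N := N)) :=
    Submodule.span_le.mpr <| Set.range_subset_iff.mpr fun k => ⟨_, linForm_proj k⟩
  exact hle hspan

/-- Substitution of a linear map into a polynomial, `F ↦ F ∘ A`. -/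
def linSubst (A : (Fin N → K) →ₗ[K] (Fin M → K)) :
    MvPolynomial (Fin M) K →ₐ[K] MvPolynomial (Fin N) K :=
  aeval fun k => linForm (LinearMap.proj k ∘ₗ A)

lemma linSubst_linForm (A : (Fin N → K) →ₗ[K] (Fin M → K)) (l : Module.Dual K (Fin M → K)) :
    linSubst A (linForm l) = linForm (l ∘ₗ A) := by
  have hl : l ∘ₗ A = ∑ k, l (Pi.single k 1) • (LinearMap.proj k ∘ₗ A) :=
    LinearMap.ext fun z => by simp [apply_eq_sum_single l (A z), mul_comm]
  rw [hl, linForm_apply]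
  simp only [linSubst, map_sum, map_smul, aeval_X]

lemma linSubst_linSubst {L : ℕ} (A : (Fin N → K) →ₗ[K] (Fin M → K))
    (B : (Fin M → K) →ₗ[K] (Fin L → K)) (F : MvPolynomial (Fin L) K) :
    linSubst A (linSubst B F) = linSubst (B ∘ₗ A) F := by
  have : (linSubst A).comp (linSubst B) = linSubst (B ∘ₗ A) :=
    algHom_ext fun k => by
      rw [← linForm_proj]
      simp only [AlgHom.comp_apply, linSubst_linForm, LinearMap.comp_assoc]
  exact DFunLike.congr_fun this F

lemma linSubst_id (F : MvPolynomial (Fin N) K) : linSubst LinearMap.id F = F := by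
  have : linSubst LinearMap.id = AlgHom.id K (MvPolynomial (Fin N) K) :=
    algHom_ext fun k => by simp [← linForm_proj, linSubst_linForm]
  exact DFunLike.congr_fun this F

lemma eval_linSubst (A : (Fin N → K) →ₗ[K] (Fin M → K)) (F : MvPolynomial (Fin M) K)
    (z : Fin N → K) : eval z (linSubst A F) = eval (A z) F := by
  have : (aeval z).comp (linSubst A) = aeval (A z) :=
    algHom_ext fun k => by
      rw [← linForm_proj, AlgHom.comp_apply, linSubst_linForm]
      simp only [aeval_eq_eval, eval_linForm, LinearMap.comp_apply]
  exact DFunLike.congr_fun this F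

lemma isHomogeneous_linSubst (A : (Fin N → K) →ₗ[K] (Fin M → K)) {F : MvPolynomial (Fin M) K}
    {t : ℕ} (hF : F.IsHomogeneous t) : (linSubst A F).IsHomogeneous t := by
  have := hF.aeval (fun k => linForm (LinearMap.proj k ∘ₗ A)) fun k => isHomogeneous_linForm _
  rwa [one_mul] at this

end LinearForms

section PointIdeal

variable {K : Type} [Field K] {N : ℕ} {z : Fin N → K}

lemma linForm_mem_pointIdeal {l : Module.Dual K (Fin N → K)} (hl : l z = 0) :
    linForm l ∈ pointIdeal z :=
  Ideal.subset_span ⟨isHomogeneous_linForm l, by rw [eval_linForm, hl]⟩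

lemma pointIdeal_le {I : Ideal (MvPolynomial (Fin N) K)}
    (h : ∀ l : Module.Dual K (Fin N → K), l z = 0 → linForm l ∈ I) : pointIdeal z ≤ I := by
  refine Ideal.span_le.mpr ?_
  rintro _ ⟨hF, hz⟩
  obtain ⟨l, rfl⟩ := exists_linForm_eq hF
  exact h l (by rwa [eval_linForm] at hz)

lemma pointIdeal_eq_span_range {ι : Type*} {w : ι → Module.Dual K (Fin N → K)}
    (hw : Submodule.span K (Set.range w) = LinearMap.ker (Module.Dual.eval K _ z)) :
    pointIdeal z = Ideal.span (Set.range fun x => linForm (w x)) := by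
  refine le_antisymm (pointIdeal_le fun l hl => ?_) ?_
  · have hle : Submodule.span K (Set.range w) ≤
        ((Ideal.span (Set.range fun x => linForm (w x))).restrictScalars K).comap linForm :=
      Submodule.span_le.mpr <| Set.range_subset_iff.mpr fun x => Ideal.subset_span ⟨x, rfl⟩
    exact hle (hw.ge hl)
  · exact Ideal.span_le.mpr <| Set.range_subset_iff.mpr fun x =>
      linForm_mem_pointIdeal (hw.le (Submodule.subset_span ⟨x, rfl⟩))

lemma linSubst_mem_pointIdeal_pow {M : ℕ} (A : (Fin N → K) →ₗ[K] (Fin M → K)) (z : Fin N → K)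
    {m : ℕ} {F : MvPolynomial (Fin M) K} (hF : F ∈ pointIdeal (A z) ^ m) :
    linSubst A F ∈ pointIdeal z ^ m := by
  have hle : (pointIdeal (A z)).map (linSubst A) ≤ pointIdeal z :=
    Ideal.map_le_iff_le_comap.mpr <| pointIdeal_le fun l hl =>
      Ideal.mem_comap.mpr <| by
        rw [linSubst_linForm]
        exact linForm_mem_pointIdeal hl
  refine Ideal.pow_right_mono hle m ?_
  rw [← Ideal.map_pow]
  exact Ideal.mem_map_of_mem _ hF

lemma sub_eval_mul_linForm_pow_mem {u : Module.Dual K (Fin N → K)} (hu : u z = 1)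
    {F : MvPolynomial (Fin N) K} {t : ℕ} (hF : F.IsHomogeneous t) :
    F - C (eval z F) * linForm u ^ t ∈ pointIdeal z := by
  -- Modulo the ideal of `z` every variable `Xⱼ` is congruent to `zⱼ u`.
  have hX (j : Fin N) : Ideal.Quotient.mk (pointIdeal z) (X j) =
      Ideal.Quotient.mk (pointIdeal z) (C (z j) * linForm u) := by
    rw [Ideal.Quotient.eq, ← linForm_proj, ← smul_eq_C_mul, ← map_smul, ← map_sub]
    exact linForm_mem_pointIdeal (by simp [hu])
  rw [← Ideal.Quotient.eq, F.as_sum]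
  simp only [map_sum, Finset.sum_mul]
  refine Finset.sum_congr rfl fun d hd => ?_
  have hdeg : ∑ j, d j = t := by
    rw [← Finsupp.degree_eq_sum]
    exact (hF.degree_eq_sum_deg_support hd).symm
  rw [monomial_eq, Finsupp.prod_fintype _ _ fun _ => pow_zero _]
  simp only [map_mul, map_prod, map_pow, hX, eval_C, eval_X, mul_pow, Finset.prod_mul_distrib,
    Finset.prod_pow_eq_pow_sum, hdeg, mul_assoc]

lemma mem_pointIdeal_of_eval_eq_zero (hz : z ≠ 0) {F : MvPolynomial (Fin N) K} {t : ℕ}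
    (hF : F.IsHomogeneous t) (h : eval z F = 0) : F ∈ pointIdeal z := by
  obtain ⟨u, hu⟩ := Module.Projective.exists_dual_eq_one K hz
  simpa [h] using sub_eval_mul_linForm_pow_mem hu hF

attribute [local instance] gradedAlgebra

lemma isHomogeneous_pointIdeal_pow (z : Fin N → K) (k : ℕ) :
    (pointIdeal z ^ k).IsHomogeneous (homogeneousSubmodule (Fin N) K) := by
  induction k with
  | zero => simpa using Ideal.IsHomogeneous.top _
  | succ k ih =>
    rw [pow_succ]
    exact ih.mul (Ideal.homogeneous_span _ _ fun F hF => ⟨1, hF.1⟩)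

lemma homogeneousComponent_mul_right {σ R : Type*} [CommSemiring R] {k : ℕ} (t : ℕ)
    (F : MvPolynomial σ R) {G : MvPolynomial σ R} (hG : G.IsHomogeneous k) :
    homogeneousComponent (t + k) (F * G) = homogeneousComponent t F * G := by
  simp only [← decomposition.decompose'_apply]
  exact DirectSum.coe_decompose_mul_add_of_right_mem (homogeneousSubmodule σ R) hG

/-- The coefficients of a combination of the linear generators may be replaced by their components
of degree `t`. -/
lemma exists_eq_sum_linForm_mul {ι : Type*} [Fintype ι] {w : ι → Module.Dual K (Fin N → K)}
    (hw : Submodule.span K (Set.range w) = LinearMap.ker (Module.Dual.eval K _ z)) {k t : ℕ}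
    {F : MvPolynomial (Fin N) K} (hF : F.IsHomogeneous (t + 1)) (hFz : F ∈ pointIdeal z ^ (k + 1)) :
    ∃ G : ι → MvPolynomial (Fin N) K, (∀ x, (G x).IsHomogeneous t) ∧
      (∀ x, G x ∈ pointIdeal z ^ k) ∧ F = ∑ x, linForm (w x) * G x := by
  rw [pow_succ] at hFz
  nth_rw 2 [pointIdeal_eq_span_range hw] at hFz
  obtain ⟨a, ha, hsum⟩ := (Submodule.mem_ideal_smul_span_iff_exists_sum _ _ _).mp hFz
  refine ⟨fun x => homogeneousComponent t (a x), fun x => homogeneousComponent_isHomogeneous t _,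
    fun x => homogeneousComponent_mem_of_mem (isHomogeneous_pointIdeal_pow z k) (ha x) t, ?_⟩
  calc F = homogeneousComponent (t + 1) (∑ x, a x * linForm (w x)) := by
        rw [← homogeneousComponent_eq_self hF, ← hsum, Finsupp.sum_fintype _ _ (by simp)]
        simp only [smul_eq_mul]
    _ = ∑ x, linForm (w x) * homogeneousComponent t (a x) := by
        simp only [map_sum, homogeneousComponent_mul_right t _ (isHomogeneous_linForm _), mul_comm]

lemma isHomogeneous_linForm_pow_mul {u : Module.Dual K (Fin N → K)} {G : MvPolynomial (Fin N) K}
    {i k t : ℕ} (hG : G.IsHomogeneous k) (h : i + k = t) : (linForm u ^ i * G).IsHomogeneous t := by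
  have := ((isHomogeneous_linForm u).pow i).mul hG
  rwa [one_mul, h] at this

lemma exists_leadingForm {u : Module.Dual K (Fin N → K)} (hu : u z = 1) {k t : ℕ} (hkt : k ≤ t)
    {F : MvPolynomial (Fin N) K} (hF : F.IsHomogeneous t) (hFz : F ∈ pointIdeal z ^ k) :
    ∃ G : MvPolynomial (Fin N) K, G.IsHomogeneous k ∧ G ∈ pointIdeal z ^ k ∧
      F - linForm u ^ (t - k) * G ∈ pointIdeal z ^ (k + 1) := by
  induction k generalizing t F with
  | zero =>
    refine ⟨C (eval z F), isHomogeneous_C _ _, by simp, ?_⟩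
    simpa [mul_comm] using sub_eval_mul_linForm_pow_mem hu hF
  | succ k ih =>
    obtain ⟨t, rfl⟩ : ∃ t', t = t' + 1 := ⟨t - 1, by lia⟩
    obtain ⟨r, w, hw⟩ := Submodule.fg_iff_exists_fin_generating_family.mp
      (IsNoetherian.noetherian (LinearMap.ker (Module.Dual.eval K _ z)))
    have hwz (x) : linForm (w x) ∈ pointIdeal z :=
      linForm_mem_pointIdeal (hw.le (Submodule.subset_span ⟨x, rfl⟩))
    obtain ⟨F', hF', hFz', rfl⟩ := exists_eq_sum_linForm_mul hw hF hFz
    choose G hG hGz hFG using fun x => ih (Nat.le_of_succ_le_succ hkt) (hF' x) (hFz' x)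
    refine ⟨∑ x, linForm (w x) * G x, IsHomogeneous.sum _ _ _ fun x _ =>
      add_comm 1 k ▸ (isHomogeneous_linForm (w x)).mul (hG x), ?_, ?_⟩
    · exact sum_mem fun x _ => pow_succ' (pointIdeal z) k ▸ Ideal.mul_mem_mul (hwz x) (hGz x)
    · rw [Nat.add_sub_add_right, Finset.mul_sum, ← Finset.sum_sub_distrib]
      refine sum_mem fun x _ => ?_
      rw [pow_succ', mul_left_comm, ← mul_sub]
      exact Ideal.mul_mem_mul (hwz x) (hFG x)

lemma exists_sub_linForm_pow_mul_mem {u : Module.Dual K (Fin N → K)} (hu : u z = 1) {m t : ℕ}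
    (hmt : m ≤ t) {F : MvPolynomial (Fin N) K} (hF : F.IsHomogeneous t) :
    ∃ G : MvPolynomial (Fin N) K, G.IsHomogeneous m ∧
      F - linForm u ^ (t - m) * G ∈ pointIdeal z ^ (m + 1) := by
  induction m with
  | zero =>
    obtain ⟨G, hG, -, h⟩ := exists_leadingForm hu hmt hF (by simp)
    exact ⟨G, hG, h⟩
  | succ m ih =>
    obtain ⟨G, hG, h⟩ := ih (by lia)
    obtain ⟨L, hL, -, h'⟩ := exists_leadingForm hu hmt
      (hF.sub (isHomogeneous_linForm_pow_mul (u := u) hG (Nat.sub_add_cancel (by lia)))) h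
    refine ⟨linForm u ^ 1 * G + L, (isHomogeneous_linForm_pow_mul hG (by lia)).add hL, ?_⟩
    convert h' using 1
    rw [show t - m = t - (m + 1) + 1 by lia]
    ring

end PointIdeal

section Codimension

variable {K : Type} [Field K] {N : ℕ}

/-- The Taylor expansion `F ↦ F(X + z)` at the point `z`. -/
def taylorAt (z : Fin N → K) : MvPolynomial (Fin N) K →ₐ[K] MvPolynomial (Fin N) K :=
  aeval fun k => X k + C (z k)

lemma taylorAt_linForm (z : Fin N → K) (l : Module.Dual K (Fin N → K)) :
    taylorAt z (linForm l) = linForm l + C (l z) := by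
  rw [apply_eq_sum_single l z, linForm_apply, map_sum, map_sum, ← Finset.sum_add_distrib]
  refine Finset.sum_congr rfl fun k _ => ?_
  rw [map_smul, taylorAt, aeval_X, smul_add, smul_eq_C_mul (C _), ← C_mul, mul_comm (z k)]

lemma taylorAt_injective (z : Fin N → K) : Function.Injective (taylorAt z) := by
  have : (taylorAt (-z)).comp (taylorAt z) = AlgHom.id K _ :=
    algHom_ext fun k => by simp [taylorAt, algebraMap_eq]
  exact Function.LeftInverse.injective (g := taylorAt (-z)) (DFunLike.congr_fun this)

lemma totalDegree_taylorAt_le (z : Fin N → K) (F : MvPolynomial (Fin N) K) :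
    (taylorAt z F).totalDegree ≤ F.totalDegree := by
  have hX (k : Fin N) : (X k + C (z k) : MvPolynomial (Fin N) K).totalDegree ≤ 1 :=
    (totalDegree_add _ _).trans (by simp)
  rw [taylorAt, aeval_def, eval₂_eq']
  refine totalDegree_finsetSum_le fun d hd => (totalDegree_mul _ _).trans ?_
  rw [algebraMap_eq, totalDegree_C, zero_add]
  calc (∏ k, (X k + C (z k)) ^ d k : MvPolynomial (Fin N) K).totalDegree
      ≤ ∑ k, d k * (X k + C (z k) : MvPolynomial (Fin N) K).totalDegree :=
        (totalDegree_finsetProd _ _).trans (Finset.sum_le_sum fun k _ => totalDegree_pow _ _)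
    _ ≤ d.degree := by
        rw [Finsupp.degree_eq_sum]
        exact Finset.sum_le_sum fun k _ => mul_le_of_le_one_right' (hX k)
    _ ≤ F.totalDegree := le_totalDegree hd

lemma linForm_mem_idealOfVars (l : Module.Dual K (Fin N → K)) :
    linForm l ∈ idealOfVars (Fin N) K := by
  rw [linForm_apply]
  exact sum_mem fun k _ => Submodule.smul_of_tower_mem _ _ (Ideal.subset_span ⟨k, rfl⟩)

lemma taylorAt_mem_idealOfVars_pow {z : Fin N → K} {m : ℕ} {F : MvPolynomial (Fin N) K}
    (hF : F ∈ pointIdeal z ^ m) : taylorAt z F ∈ idealOfVars (Fin N) K ^ m := by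
  have hle : (pointIdeal z).map (taylorAt z) ≤ idealOfVars (Fin N) K :=
    Ideal.map_le_iff_le_comap.mpr <| pointIdeal_le fun l hl => by
      rw [Ideal.mem_comap, taylorAt_linForm, hl, C_0, add_zero]
      exact linForm_mem_idealOfVars l
  refine Ideal.pow_right_mono hle m ?_
  rw [← Ideal.map_pow]
  exact Ideal.mem_map_of_mem _ hF

lemma eq_zero_of_mem_idealOfVars_pow {m : ℕ} {F : MvPolynomial (Fin N) K}
    (hF : F ∈ idealOfVars (Fin N) K ^ m) (hdeg : F.totalDegree < m) : F = 0 := by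
  by_contra hne
  obtain ⟨d, hd⟩ := support_nonempty.mpr hne
  exact ((mem_pow_idealOfVars_iff m F).mp hF d hd).not_gt ((le_totalDegree hd).trans_lt hdeg)

lemma mem_of_one_add_mul_mem_pow {R : Type*} [CommRing R] {I : Ideal R} {a b : R} {m : ℕ}
    (ha : a ∈ I) (h : (1 + a) * b ∈ I ^ m) : b ∈ I ^ m := by
  have hgeom : b = (-a) ^ m * b + (∑ i ∈ Finset.range m, (-a) ^ i) * ((1 + a) * b) := by
    linear_combination b * geom_sum_mul (-a) m
  rw [hgeom]
  exact add_mem (Ideal.mul_mem_right _ _ (Ideal.pow_mem_pow (neg_mem ha) m))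
    (Ideal.mul_mem_left _ _ h)

lemma mem_pow_of_one_add_pow_mul_mem_pow {R : Type*} [CommRing R] {I : Ideal R} {a b : R}
    {m k : ℕ} (ha : a ∈ I) (h : (1 + a) ^ k * b ∈ I ^ m) : b ∈ I ^ m := by
  induction k with
  | zero => simpa using h
  | succ k ih => exact ih (mem_of_one_add_mul_mem_pow ha (by rwa [← mul_assoc, ← pow_succ']))

/-- Expanding at `z` turns `u` into the unit `1 + u` of the local ring and leaves the degree of
`F` below `m`. -/
lemma eq_zero_of_linForm_pow_mul_mem {z : Fin N → K} {u : Module.Dual K (Fin N → K)}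
    (hu : u z = 1) {F : MvPolynomial (Fin N) K} {m k : ℕ} (hdeg : F.totalDegree < m)
    (hF : linForm u ^ k * F ∈ pointIdeal z ^ m) : F = 0 := by
  have hmem := taylorAt_mem_idealOfVars_pow hF
  rw [map_mul, map_pow, taylorAt_linForm, hu, C_1, add_comm] at hmem
  refine taylorAt_injective z ?_
  rw [map_zero]
  exact eq_zero_of_mem_idealOfVars_pow
    (mem_pow_of_one_add_pow_mul_mem_pow (linForm_mem_idealOfVars u) hmem)
    ((totalDegree_taylorAt_le z F).trans_lt hdeg)

instance finiteDimensional_homogeneousSubmodule (t : ℕ) :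
    FiniteDimensional K (homogeneousSubmodule (Fin N) K t) :=
  Module.Finite.iff_fg.mpr (homogeneousSubmodule_fg _ _ _)

lemma finrank_homogeneousSubmodule (K : Type) [Field K] (n t : ℕ) :
    Module.finrank K (homogeneousSubmodule (Fin (n + 1)) K t) = (t + n).choose n := by
  have hset : {d : Fin (n + 1) →₀ ℕ | d.degree = t} =
      ((Finset.univ : Finset (Fin (n + 1))).finsuppAntidiag t : Set _) := by
    ext d; simp [Finsupp.degree_eq_sum]
  rw [homogeneousSubmodule_eq_finsupp_supported, hset]
  have := Module.finrank_eq_nat_card_basis (basisRestrictSupport K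
    ((Finset.univ : Finset (Fin (n + 1))).finsuppAntidiag t : Set (Fin (n + 1) →₀ ℕ)))
  refine this.trans ?_
  rw [SetLike.coe_sort_coe, Nat.card_eq_fintype_card, Fintype.card_coe,
    Finset.card_finsuppAntidiag_nat_eq_choose, Finset.card_fin,
    show n + 1 + t - 1 = t + n by lia, Nat.choose_symm_add]

/-- Forms of degree `t` split as those vanishing to order `m` at `z` plus `u ^ (t + 1 - m)` times
the forms of degree `m - 1`. -/
lemma finrank_pointIdeal_pow_add {n m t : ℕ} (hm : 0 < m) (hmt : m ≤ t + 1)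
    {z : Fin (n + 1) → K} (hz : z ≠ 0) :
    Module.finrank K ↥(homogeneousSubmodule (Fin (n + 1)) K t ⊓
      (pointIdeal z ^ m).restrictScalars K) + (m + n - 1).choose n = (t + n).choose n := by
  obtain ⟨u, hu⟩ := Module.Projective.exists_dual_eq_one K hz
  obtain ⟨m, rfl⟩ : ∃ m', m = m' + 1 := ⟨m - 1, by lia⟩
  have hmt : m ≤ t := by lia
  have hmul : Function.Injective (LinearMap.mulLeft K (linForm u ^ (t - m))) :=
    mul_right_injective₀ (pow_ne_zero _ fun h => by simpa [hu, h] using (eval_linForm u z).symm)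
  set U := (homogeneousSubmodule (Fin (n + 1)) K m).map (LinearMap.mulLeft K (linForm u ^ (t - m)))
  have hU : Module.finrank K U = (m + n).choose n :=
    ((Submodule.equivMapOfInjective _ hmul _).finrank_eq).symm.trans
      (finrank_homogeneousSubmodule K n m)
  set V := homogeneousSubmodule (Fin (n + 1)) K t ⊓ (pointIdeal z ^ (m + 1)).restrictScalars K
  have hinf : V ⊓ U = ⊥ := by
    refine (Submodule.eq_bot_iff _).mpr ?_
    rintro _ ⟨⟨-, hGz⟩, G, hG, rfl⟩
    rw [eq_zero_of_linForm_pow_mul_mem hu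
      (Nat.lt_succ_of_le (IsHomogeneous.totalDegree_le hG)) hGz, map_zero]
  have hsup : V ⊔ U = homogeneousSubmodule (Fin (n + 1)) K t := by
    refine le_antisymm (sup_le inf_le_left (Submodule.map_le_iff_le_comap.mpr fun G hG =>
      isHomogeneous_linForm_pow_mul hG (Nat.sub_add_cancel hmt))) fun F hF => ?_
    obtain ⟨G, hG, hFG⟩ := exists_sub_linForm_pow_mul_mem hu hmt hF
    refine Submodule.mem_sup.mpr ⟨_, ⟨?_, hFG⟩, _, ⟨G, hG, rfl⟩, sub_add_cancel F _⟩
    exact IsHomogeneous.sub hF (isHomogeneous_linForm_pow_mul hG (Nat.sub_add_cancel hmt))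
  have : FiniteDimensional K U := Submodule.finiteDimensional_of_le (hsup ▸ le_sup_right)
  have : FiniteDimensional K V := Submodule.finiteDimensional_of_le inf_le_left
  have hdim := Submodule.finrank_sup_add_finrank_inf_eq V U
  rw [hinf, hsup, finrank_bot, hU, finrank_homogeneousSubmodule] at hdim
  rw [show m + 1 + n - 1 = m + n by lia, ← hdim, add_zero]

end Codimension

section Separation

/-- The fat points `mᵢ pᵢ` impose independent conditions on the forms of degree `t`: arbitrary
jets of such forms at the `pᵢ` are the jets of a single form. -/
def SeparatesJets {K : Type} [Field K] {N : ℕ} {ι : Type*} (p : ι → Fin N → K) (m : ι → ℕ)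
    (t : ℕ) : Prop :=
  ∀ f : ι → MvPolynomial (Fin N) K, (∀ i, (f i).IsHomogeneous t) →
    ∃ F : MvPolynomial (Fin N) K, F.IsHomogeneous t ∧ ∀ i, F - f i ∈ pointIdeal (p i) ^ m i

lemma surjective_pi_mkQ_iff {K V ι : Type*} [Field K] [AddCommGroup V] [Module K V]
    [FiniteDimensional K V] [Fintype ι] (U : ι → Submodule K V) :
    Function.Surjective (LinearMap.pi fun i => (U i).mkQ) ↔
      ∑ i, Module.finrank K (V ⧸ U i) + Module.finrank K ↥(⨅ i, U i) = Module.finrank K V := by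
  have hrank := LinearMap.finrank_range_add_finrank_ker (LinearMap.pi fun i => (U i).mkQ)
  have hker : LinearMap.ker (LinearMap.pi fun i => (U i).mkQ) = ⨅ i, U i := by
    simp [LinearMap.ker_pi]
  rw [hker] at hrank
  rw [← Module.finrank_pi_fintype]
  rw [← LinearMap.range_eq_top, ← hrank, Nat.add_right_cancel_iff]
  exact ⟨fun h => by rw [h, finrank_top], fun h => Submodule.eq_top_of_finrank_eq h.symm⟩

variable {K : Type} [Field K] {n t : ℕ} {ι : Type*} {p : ι → Fin (n + 1) → K} {m : ι → ℕ}

lemma separatesJets_iff_finrank [Fintype ι] (hp : ∀ i, p i ≠ 0) (hm : ∀ i, 0 < m i)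
    (hmt : ∀ i, m i ≤ t + 1) :
    SeparatesJets p m t ↔ ∑ i, (m i + n - 1).choose n +
      Module.finrank K ↥(homogeneousSubmodule (Fin (n + 1)) K t ⊓
        (⨅ i, pointIdeal (p i) ^ m i).restrictScalars K) = (t + n).choose n := by
  set H := homogeneousSubmodule (Fin (n + 1)) K t
  have hcomap (I : Ideal (MvPolynomial (Fin (n + 1)) K)) :
      Module.finrank K ((I.restrictScalars K).comap H.subtype) =
        Module.finrank K ↥(H ⊓ I.restrictScalars K) := by
    rw [← Submodule.map_comap_subtype]
    exact (Submodule.equivMapOfInjective H.subtype H.injective_subtype _).finrank_eq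
  let U (i : ι) : Submodule K H := ((pointIdeal (p i) ^ m i).restrictScalars K).comap H.subtype
  have hU (i : ι) : Module.finrank K (H ⧸ U i) = (m i + n - 1).choose n := by
    have h := finrank_pointIdeal_pow_add (hm i) (hmt i) (hp i)
    rw [← hcomap, ← finrank_homogeneousSubmodule K n t,
      ← Submodule.finrank_quotient_add_finrank (U i)] at h
    lia
  have hinf : ⨅ i, U i = ((⨅ i, pointIdeal (p i) ^ m i).restrictScalars K).comap H.subtype := by
    ext F
    simp [U, Submodule.mem_iInf]
  rw [← hcomap, ← hinf, ← finrank_homogeneousSubmodule K n t]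
  simp only [← hU]
  rw [← surjective_pi_mkQ_iff]
  constructor
  · intro h g
    choose f hf using fun i => (U i).mkQ_surjective (g i)
    obtain ⟨F, hF, hFf⟩ := h (fun i => f i) fun i => (f i).2
    exact ⟨⟨F, hF⟩, funext fun i => (hf i).symm ▸ (Submodule.Quotient.eq (U i)).mpr (hFf i)⟩
  · intro h f hf
    obtain ⟨F, hF⟩ := h fun i => (U i).mkQ ⟨f i, hf i⟩
    exact ⟨F, F.2, fun i => (Submodule.Quotient.eq (U i)).mp (congrFun hF i)⟩

lemma SeparatesJets.sum_choose_le [Fintype ι] (h : SeparatesJets p m t) (hp : ∀ i, p i ≠ 0)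
    (hm : ∀ i, 0 < m i) (hmt : ∀ i, m i ≤ t + 1) :
    ∑ i, (m i + n - 1).choose n ≤ (t + n).choose n :=
  ((separatesJets_iff_finrank hp hm hmt).mp h) ▸ Nat.le_add_right _ _

lemma choose_lt_choose_left {a b k : ℕ} (hk : 0 < k) (hka : k ≤ a + 1) (hab : a < b) :
    a.choose k < b.choose k := by
  obtain ⟨k, rfl⟩ : ∃ k', k = k' + 1 := ⟨k - 1, by lia⟩
  calc a.choose (k + 1) < a.choose k + a.choose (k + 1) :=
        Nat.lt_add_of_pos_left (Nat.choose_pos (by lia))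
    _ = (a + 1).choose (k + 1) := (Nat.choose_succ_succ a k).symm
    _ ≤ b.choose (k + 1) := Nat.choose_le_choose _ hab

lemma hilbFn_fatIdeal_eq_fatMult_iff {s : ℕ} {p : Fin s → Fin (n + 1) → K} {m : Fin s → ℕ}
    (hn : 0 < n) (hp : ∀ i, p i ≠ 0) (hm : ∀ i, 0 < m i) :
    hilbFn K (fatIdeal p m) t = fatMult n m ↔ (∀ i, m i ≤ t + 1) ∧ SeparatesJets p m t := by
  have hle : gradedDim K (fatIdeal p m) t ≤ (t + n).choose n :=
    finrank_homogeneousSubmodule K n t ▸ Submodule.finrank_mono inf_le_left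
  have hiff (hmt : ∀ i, m i ≤ t + 1) : SeparatesJets p m t ↔
      fatMult n m + gradedDim K (fatIdeal p m) t = (t + n).choose n :=
    separatesJets_iff_finrank hp hm hmt
  rw [hilbFn, finrank_homogeneousSubmodule]
  refine ⟨fun h => ?_, fun ⟨hmt, h⟩ => by have := (hiff hmt).mp h; lia⟩
  have hmt (i) : m i ≤ t + 1 := by
    by_contra! hlt
    have hlt : (t + n).choose n < (m i + n - 1).choose n :=
      choose_lt_choose_left hn (by lia) (by lia)
    have hfat : (m i + n - 1).choose n ≤ fatMult n m :=
      Finset.single_le_sum (f := fun i => (m i + n - 1).choose n) (by simp) (Finset.mem_univ i)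
    lia
  exact ⟨hmt, (hiff hmt).mpr (by lia)⟩

end Separation

/-! ### Weighted families of functionals -/

section Functionals

variable {ι : Type*}

open Classical in
/-- The weights `d`, lowered by one on the set `J`. -/
def dropOn (J : Finset ι) (d : ι → ℕ) (x : ι) : ℕ :=
  if x ∈ J then d x - 1 else d x

open Classical in
lemma sum_dropOn_add_card_inter {J : Finset ι} {d : ι → ℕ} (hJ : ∀ x ∈ J, 1 ≤ d x) (S : Finset ι) :
    ∑ x ∈ S, dropOn J d x + (J ∩ S).card = ∑ x ∈ S, d x := by
  rw [Finset.inter_comm, ← Finset.filter_mem_eq_inter, Finset.card_filter,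
    ← Finset.sum_add_distrib]
  refine Finset.sum_congr rfl fun x _ => ?_
  by_cases hx : x ∈ J
  · simp [dropOn, hx, Nat.sub_add_cancel (hJ x hx)]
  · simp [dropOn, hx]

variable {K V : Type*} [Field K] [AddCommGroup V] [Module K V] [Fintype ι]

open Classical in
/-- The support of a subspace `Z` with respect to a family of functionals: the indices of those
functionals that do not vanish identically on `Z`. -/
def dualSupport (f : ι → Module.Dual K V) (Z : Submodule K V) : Finset ι :=
  {x | ¬Z ≤ LinearMap.ker (f x)}

/-- The form in which the inequalities of Segre type enter the construction of forms: the weights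
of the functionals that do not vanish on a nonzero subspace `Z` add up to at least
`dim Z * t + i`. -/
def SegreCondition (f : ι → Module.Dual K V) (d : ι → ℕ) (t i : ℕ) : Prop :=
  ∀ Z : Submodule K V, Z ≠ ⊥ → Module.finrank K Z * t + i ≤ ∑ x ∈ dualSupport f Z, d x

open Classical in
/-- The total weight of the functionals with kernel `L`. -/
def kerWeight (f : ι → Module.Dual K V) (d : ι → ℕ) (L : Submodule K V) : ℕ :=
  ∑ x with LinearMap.ker (f x) = L, d x

variable {f : ι → Module.Dual K V} {d : ι → ℕ} {t i : ℕ} {x : ι} {Z : Submodule K V}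

lemma mem_dualSupport : x ∈ dualSupport f Z ↔ ¬Z ≤ LinearMap.ker (f x) := by
  simp [dualSupport]

lemma dualSupport_mono {Z' : Submodule K V} (h : Z ≤ Z') : dualSupport f Z ⊆ dualSupport f Z' :=
  fun _ hx => mem_dualSupport.mpr fun hle => mem_dualSupport.mp hx (h.trans hle)

lemma SegreCondition.exists_pos (h : SegreCondition f d (t + 1) i) (hZ : Z ≠ ⊥)
    [FiniteDimensional K V] : ∃ x, ¬Z ≤ LinearMap.ker (f x) ∧ 1 ≤ d x := by
  have hpos : 0 < Module.finrank K Z := Submodule.one_le_finrank_iff.mpr hZ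
  have hsum : 0 < ∑ x ∈ dualSupport f Z, d x :=
    (Nat.add_pos_left (Nat.mul_pos hpos t.succ_pos) i).trans_le (h Z hZ)
  obtain ⟨x, hx, hdx⟩ := Finset.sum_pos_iff.mp hsum
  exact ⟨x, mem_dualSupport.mp hx, hdx⟩

section Plane

variable [FiniteDimensional K V] (hV : Module.finrank K V = 2)
include hV

lemma finrank_ker_eq_one {g : Module.Dual K V} (hg : g ≠ 0) :
    Module.finrank K (LinearMap.ker g) = 1 := by
  have := Module.Dual.finrank_ker_add_one_of_ne_zero hg
  lia

lemma ker_eq_iff_le (hZ : Module.finrank K Z = 1) {g : Module.Dual K V} (hg : g ≠ 0) :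
    LinearMap.ker g = Z ↔ Z ≤ LinearMap.ker g :=
  ⟨fun h => h.ge, fun h =>
    (Submodule.eq_of_le_of_finrank_eq h (hZ.trans (finrank_ker_eq_one hV hg).symm)).symm⟩

lemma sum_dualSupport_add_kerWeight (hZ : Module.finrank K Z = 1) :
    ∑ x ∈ dualSupport f Z, d x + kerWeight f d Z = ∑ x ∈ dualSupport f ⊤, d x := by
  classical
  rw [← Finset.sum_sdiff (dualSupport_mono (f := f) (le_top : Z ≤ ⊤)), add_comm, kerWeight]
  congr 1
  refine Finset.sum_congr (Finset.ext fun x => ?_) fun _ _ => rfl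
  simp only [Finset.mem_filter, Finset.mem_univ, true_and, Finset.mem_sdiff, mem_dualSupport,
    top_le_iff, LinearMap.ker_eq_top, not_not]
  refine ⟨fun h => ?_, fun ⟨hx, h⟩ => (ker_eq_iff_le hV hZ hx).mpr h⟩
  have hx : f x ≠ 0 := by
    intro hx
    rw [hx, LinearMap.ker_zero] at h
    rw [← h, finrank_top] at hZ
    lia
  exact ⟨hx, h.ge⟩

-- If `Z` were tight, the functionals with kernel `Z` would be heavier than those not vanishing
-- on `Z`, although `ker (f a)` and `ker (f b)` are both at least as heavy as `Z`.
lemma succ_le_sum_dualSupport {a b : ι} (h : SegreCondition f d (t + 1) i) (hit : i ≤ t)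
    (hab : LinearMap.ker (f a) ≠ LinearMap.ker (f b))
    (ha : ∀ y, f y ≠ 0 → 1 ≤ d y → kerWeight f d (LinearMap.ker (f y)) ≤
      kerWeight f d (LinearMap.ker (f a)))
    (hb : ∀ y, f y ≠ 0 → 1 ≤ d y → LinearMap.ker (f y) ≠ LinearMap.ker (f a) →
      kerWeight f d (LinearMap.ker (f y)) ≤ kerWeight f d (LinearMap.ker (f b)))
    (hZ : Module.finrank K Z = 1) (haZ : ¬Z ≤ LinearMap.ker (f a))
    (hbZ : ¬Z ≤ LinearMap.ker (f b)) : t + 1 + i + 1 ≤ ∑ x ∈ dualSupport f Z, d x := by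
  classical
  by_contra! htight
  have htop := h ⊤ (by rintro htop; rw [← finrank_top, htop, finrank_bot] at hV; lia)
  rw [finrank_top, hV, ← sum_dualSupport_add_kerWeight hV hZ] at htop
  obtain ⟨y, hy, hdy⟩ := Finset.sum_pos_iff.mp
    (show 0 < ∑ x with LinearMap.ker (f x) = Z, d x by rw [kerWeight] at htop; lia)
  rw [Finset.mem_filter] at hy
  have hy0 : f y ≠ 0 := fun h0 => haZ (by
    have : Z = ⊤ := by rw [← hy.2, h0, LinearMap.ker_zero]
    rw [this, finrank_top] at hZ
    lia)
  have hZa := hy.2 ▸ ha y hy0 hdy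
  have hZb := hy.2 ▸ hb y hy0 hdy fun hya => haZ (hy.2 ▸ hya.le)
  have hsum : kerWeight f d (LinearMap.ker (f a)) + kerWeight f d (LinearMap.ker (f b)) ≤
      ∑ x ∈ dualSupport f Z, d x := by
    rw [kerWeight, kerWeight, ← Finset.sum_union]
    · refine Finset.sum_le_sum_of_subset fun x hx => mem_dualSupport.mpr ?_
      rcases Finset.mem_union.mp hx with hx | hx <;> rw [(Finset.mem_filter.mp hx).2] <;> assumption
    · refine Finset.disjoint_filter.mpr fun x _ hxa hxb => hab (hxa ▸ hxb)
  lia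

lemma exists_heavy_pair (h : SegreCondition f d (t + 1) i) (hit : i ≤ t) :
    ∃ a b, 1 ≤ d a ∧ 1 ≤ d b ∧ f a ≠ 0 ∧ f b ≠ 0 ∧
      LinearMap.ker (f a) ≠ LinearMap.ker (f b) ∧
      ∀ Z : Submodule K V, Module.finrank K Z = 1 → ¬Z ≤ LinearMap.ker (f a) →
        ¬Z ≤ LinearMap.ker (f b) → t + 1 + i + 1 ≤ ∑ x ∈ dualSupport f Z, d x := by
  classical
  have hne (Z : Submodule K V) (hZ : 1 ≤ Module.finrank K Z) : Z ≠ ⊥ :=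
    Submodule.one_le_finrank_iff.mp hZ
  obtain ⟨a, ha, hamax⟩ := Finset.exists_max_image ({x | f x ≠ 0 ∧ 1 ≤ d x} : Finset ι)
    (fun x => kerWeight f d (LinearMap.ker (f x))) (by
      obtain ⟨x, hx, hdx⟩ := h.exists_pos (hne ⊤ (by rw [finrank_top]; lia))
      exact ⟨x, by simpa [hdx, LinearMap.ker_eq_top] using hx⟩)
  obtain ⟨ha0, hda⟩ := (Finset.mem_filter.mp ha).2
  obtain ⟨b, hb, hbmax⟩ := Finset.exists_max_image
    ({x | f x ≠ 0 ∧ 1 ≤ d x ∧ LinearMap.ker (f x) ≠ LinearMap.ker (f a)} : Finset ι)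
    (fun x => kerWeight f d (LinearMap.ker (f x))) (by
      obtain ⟨x, hx, hdx⟩ := h.exists_pos (hne _ (finrank_ker_eq_one hV ha0).ge)
      have hx0 : f x ≠ 0 := fun h0 => hx (by simp [h0])
      exact ⟨x, by simpa [hdx, hx0] using fun hxa => hx hxa.ge⟩)
  obtain ⟨hb0, hdb, hba⟩ := (Finset.mem_filter.mp hb).2
  refine ⟨a, b, hda, hdb, ha0, hb0, hba.symm, fun Z hZ haZ hbZ =>
    succ_le_sum_dualSupport hV h hit hba.symm ?_ ?_ hZ haZ hbZ⟩
  · exact fun y hy hdy => hamax y (by simp [hy, hdy])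
  · exact fun y hy hdy hya => hbmax y (by simp [hy, hdy, hya])

end Plane

/-- `J` indexes a basis of the dual space consisting of functionals of positive weight. -/
structure IsPositiveBasis (f : ι → Module.Dual K V) (d : ι → ℕ) (J : Finset ι) : Prop where
  card_eq : J.card = Module.finrank K V
  one_le : ∀ x ∈ J, 1 ≤ d x
  eq_zero : ∀ v, (∀ x ∈ J, f x v = 0) → v = 0

lemma exists_isPositiveBasis_of_finrank_le_one [FiniteDimensional K V]
    (hV : Module.finrank K V ≤ 1) (h : SegreCondition f d (t + 1) i) :
    ∃ J, IsPositiveBasis f d J := by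
  obtain hV | hV : Module.finrank K V = 0 ∨ Module.finrank K V = 1 := by lia
  · have := Module.finrank_zero_iff.mp hV
    exact ⟨∅, by simp [hV], by simp, fun v _ => Subsingleton.elim v 0⟩
  · obtain ⟨a, ha, hda⟩ := h.exists_pos (Submodule.one_le_finrank_iff.mp (finrank_top K V ▸ hV.ge))
    have ha0 : f a ≠ 0 := fun h0 => ha (by simp [h0])
    have hker : LinearMap.ker (f a) = ⊥ := Submodule.finrank_eq_zero.mp (by
      have := Module.Dual.finrank_ker_add_one_of_ne_zero ha0
      lia)
    exact ⟨{a}, by simp [hV], by simpa using hda, fun v hv => by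
      simpa [hker] using LinearMap.mem_ker.mpr (hv a (by simp))⟩

open Classical in
lemma IsPositiveBasis.segreCondition_dropOn {J : Finset ι} (hJ : IsPositiveBasis f d J)
    (h : SegreCondition f d (t + 1) i)
    (hJZ : ∀ Z : Submodule K V, Z ≠ ⊥ → Module.finrank K Z < (J ∩ dualSupport f Z).card →
      Module.finrank K Z * t + i + (J ∩ dualSupport f Z).card ≤ ∑ x ∈ dualSupport f Z, d x) :
    SegreCondition f (dropOn J d) t i := by
  intro Z hZ
  have hsum := sum_dropOn_add_card_inter hJ.one_le (dualSupport f Z)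
  have hle := h Z hZ
  rw [mul_add_one] at hle
  by_cases hlt : Module.finrank K Z < (J ∩ dualSupport f Z).card
  · have := hJZ Z hZ hlt
    lia
  · lia

lemma SegreCondition.exists_dropOn [FiniteDimensional K V] (hV : Module.finrank K V ≤ 2)
    (h : SegreCondition f d (t + 1) i) (hit : i ≤ t) :
    ∃ J, IsPositiveBasis f d J ∧ SegreCondition f (dropOn J d) t i := by
  classical
  have hinter (J : Finset ι) (Z : Submodule K V) : (J ∩ dualSupport f Z).card ≤ J.card :=
    Finset.card_le_card Finset.inter_subset_left
  obtain hV1 | hV2 : Module.finrank K V ≤ 1 ∨ Module.finrank K V = 2 := by lia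
  · obtain ⟨J, hJ⟩ := exists_isPositiveBasis_of_finrank_le_one hV1 h
    refine ⟨J, hJ, hJ.segreCondition_dropOn h fun Z hZ hlt => ?_⟩
    have := Submodule.one_le_finrank_iff.mpr hZ
    have := hinter J Z
    have := hJ.card_eq
    lia
  obtain ⟨a, b, hda, hdb, ha0, hb0, hab, hpair⟩ := exists_heavy_pair hV2 h hit
  have hne : a ≠ b := fun h => hab (h ▸ rfl)
  have hJ : IsPositiveBasis f d {a, b} := by
    refine ⟨by rw [Finset.card_pair hne, hV2], by simp [hda, hdb], fun v hv => ?_⟩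
    by_contra hv0
    have hline := finrank_span_singleton (K := K) hv0
    have hle (x) (hx : f x v = 0) : Submodule.span K {v} ≤ LinearMap.ker (f x) := by simpa using hx
    exact hab (((ker_eq_iff_le hV2 hline ha0).mpr (hle a (hv a (by simp)))).trans
      ((ker_eq_iff_le hV2 hline hb0).mpr (hle b (hv b (by simp)))).symm)
  refine ⟨{a, b}, hJ, hJ.segreCondition_dropOn h fun Z hZ hlt => ?_⟩
  have hle := hinter {a, b} Z
  rw [Finset.card_pair hne] at hle
  have hZ1 : Module.finrank K Z = 1 := by
    have := Submodule.one_le_finrank_iff.mpr hZ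
    lia
  have hsub : {a, b} ∩ dualSupport f Z = {a, b} :=
    Finset.eq_of_subset_of_card_le Finset.inter_subset_left (by rw [Finset.card_pair hne]; lia)
  have := hpair Z hZ1 (mem_dualSupport.mp (Finset.inter_eq_left.mp hsub (by simp)))
    (mem_dualSupport.mp (Finset.inter_eq_left.mp hsub (by simp)))
  rw [hsub, Finset.card_pair hne, hZ1]
  lia

open Classical in
lemma SegreCondition.dropOn_insert {J : Finset ι} (hJ : ∀ y ∈ insert x J, 1 ≤ d y)
    (h : SegreCondition f (dropOn J d) t (i + 1)) :
    SegreCondition f (dropOn (insert x J) d) t i := by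
  intro Z hZ
  have hJZ := sum_dropOn_add_card_inter (fun y hy => hJ y (Finset.mem_insert_of_mem hy))
    (dualSupport f Z)
  have hxJZ := sum_dropOn_add_card_inter hJ (dualSupport f Z)
  have hcard : (insert x J ∩ dualSupport f Z).card ≤ (J ∩ dualSupport f Z).card + 1 :=
    (Finset.card_le_card <| show _ ⊆ insert x (J ∩ dualSupport f Z) from fun y hy => by
      simp only [Finset.mem_inter, Finset.mem_insert] at hy ⊢
      tauto).trans (Finset.card_insert_le x _)
  have := h Z hZ
  lia

end Functionals

/-! ### Linear relations and dual bases -/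

section Relations

variable {K ι : Type*} [Field K] [Fintype ι] {N : ℕ}

/-- The space of linear relations between the vectors `p x`. -/
def relations (p : ι → Fin N → K) : Submodule K (ι → K) :=
  LinearMap.ker (Fintype.linearCombination K p)

/-- The coefficient at `x` of a linear relation between the vectors `p x`. -/
def relCoeff (p : ι → Fin N → K) (x : ι) : Module.Dual K (relations p) :=
  LinearMap.proj x ∘ₗ (relations p).subtype

lemma mem_relations {p : ι → Fin N → K} {φ : ι → K} : φ ∈ relations p ↔ ∑ x, φ x • p x = 0 := by
  rw [relations, LinearMap.mem_ker, Fintype.linearCombination_apply]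

lemma finrank_span_add_finrank_relations (p : ι → Fin N → K) :
    Module.finrank K (Submodule.span K (Set.range p)) + Module.finrank K (relations p) =
      Fintype.card ι := by
  have h := LinearMap.finrank_range_add_finrank_ker (Fintype.linearCombination K p)
  rwa [Fintype.range_linearCombination, Module.finrank_fintype_fun_eq_card] at h

lemma finrank_relations {p : ι → Fin N → K} (hp : Submodule.span K (Set.range p) = ⊤) :
    N + Module.finrank K (relations p) = Fintype.card ι := by
  rw [← finrank_span_add_finrank_relations p, hp, finrank_top, Module.finrank_fin_fun]

lemma IsPositiveBasis.exists_basis {p : ι → Fin N → K} {d : ι → ℕ} {J : Finset ι}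
    (hJ : IsPositiveBasis (relCoeff p) d J) (hp : Submodule.span K (Set.range p) = ⊤) :
    ∃ b : Module.Basis {x // x ∉ J} K (Fin N → K), ∀ x, b x = p x := by
  classical
  have hli : LinearIndependent K fun x : {x // x ∉ J} => p x := by
    refine Fintype.linearIndependent_iff.mpr fun g hg x => ?_
    let φ : ι → K := fun x => if h : x ∉ J then g ⟨x, h⟩ else 0
    have hφ : φ ∈ relations p := by
      rw [mem_relations, ← hg, ← Fintype.sum_subtype_add_sum_subtype (· ∉ J) fun x => φ x • p x,
        add_eq_left.mpr]
      · exact Finset.sum_congr rfl fun x _ => by simp [φ, x.2]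
      · exact Finset.sum_eq_zero fun x _ => by simp [φ, x.2]
    have hφ0 := hJ.eq_zero ⟨φ, hφ⟩ fun x hx => by simp [relCoeff, φ, hx]
    simpa [φ, x.2] using congrFun (congrArg Subtype.val hφ0) x
  have hcard : Fintype.card {x // x ∉ J} = Module.finrank K (Fin N → K) := by
    have := finrank_relations hp
    have := hJ.card_eq
    rw [Fintype.card_subtype_compl, Fintype.card_coe, Module.finrank_fin_fun]
    lia
  exact ⟨.mk hli (hli.span_eq_top_of_card_eq_finrank' hcard).ge, fun x => by simp⟩

lemma span_coord_eq_ker_eval {σ E : Type*} [Finite σ] [AddCommGroup E] [Module K E]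
    (b : Module.Basis σ K E) (x₀ : σ) :
    Submodule.span K (Set.range fun x : {x // x ≠ x₀} => b.coord x) =
      LinearMap.ker (Module.Dual.eval K E (b x₀)) := by
  classical
  have := Fintype.ofFinite σ
  refine le_antisymm (Submodule.span_le.mpr ?_) fun l hl => ?_
  · rintro _ ⟨x, rfl⟩
    simp [Finsupp.single_eq_of_ne x.2]
  · rw [← b.sum_dual_apply_smul_coord l]
    refine Submodule.sum_mem _ fun x _ => ?_
    by_cases hx : x = x₀
    · have hl : l (b x₀) = 0 := hl
      simp [hx, hl]
    · exact Submodule.smul_mem _ _ (Submodule.subset_span ⟨⟨x, hx⟩, rfl⟩)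

end Relations

/-! ### Forms with prescribed leading form -/

section Construction

variable {K : Type} [Field K] {ι : Type*} {N : ℕ} {p : ι → Fin N → K} {x₀ : ι}
  {u : Module.Dual K (Fin N → K)} {d : ι → ℕ} {t i : ℕ} {F G : MvPolynomial (Fin N) K}

/-- `F` is a form of degree `t` that vanishes to order `i` with leading form `G` at `p x₀`, and to
order `t - d x` at the other points `p x`. The functional `u`, normalised by `u (p x₀) = 1`,
homogenises `G`. -/
structure IsExtension (p : ι → Fin N → K) (x₀ : ι) (u : Module.Dual K (Fin N → K)) (d : ι → ℕ)
    (t i : ℕ) (G F : MvPolynomial (Fin N) K) : Prop where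
  isHomogeneous : F.IsHomogeneous t
  mem_pow : ∀ x ≠ x₀, F ∈ pointIdeal (p x) ^ (t - d x)
  sub_mem : F - linForm u ^ (t - i) * G ∈ pointIdeal (p x₀) ^ (i + 1)

lemma linForm_mul_mem_pow {J : Finset ι} {l : Module.Dual K (Fin N → K)} {y : ι}
    (hJ : ∀ x ∈ J, 1 ≤ d x) (hl : y ∉ J → l (p y) = 0)
    (hF : F ∈ pointIdeal (p y) ^ (t - dropOn J d y)) :
    linForm l * F ∈ pointIdeal (p y) ^ (t + 1 - d y) := by
  by_cases hy : y ∈ J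
  · have := hJ y hy
    rw [dropOn, if_pos hy] at hF
    exact Ideal.mul_mem_left _ _ (Ideal.pow_le_pow_right (by lia) hF)
  · rw [dropOn, if_neg hy] at hF
    refine Ideal.pow_le_pow_right (show t + 1 - d y ≤ 1 + (t - d y) by lia) ?_
    rw [pow_add, pow_one]
    exact Ideal.mul_mem_mul (linForm_mem_pointIdeal (hl hy)) hF

lemma isExtension_self (hG : G.IsHomogeneous i) (hd : ∀ x ≠ x₀, i ≤ d x) :
    IsExtension p x₀ u d i i G G where
  isHomogeneous := hG
  mem_pow x hx := by simp [Nat.sub_eq_zero_of_le (hd x hx)]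
  sub_mem := by simp

lemma IsExtension.linForm_mul {J : Finset ι} {l : Module.Dual K (Fin N → K)}
    (h : IsExtension p x₀ u (dropOn J d) t 0 G F) (hJ : ∀ x ∈ J, 1 ≤ d x)
    (hl : ∀ x ∉ J, x ≠ x₀ → l (p x) = 0) (hx₀ : l (p x₀) = 1) (hu : u (p x₀) = 1) :
    IsExtension p x₀ u d (t + 1) 0 G (linForm l * F) where
  isHomogeneous := by
    rw [add_comm]
    exact (isHomogeneous_linForm l).mul h.isHomogeneous
  mem_pow x hx := linForm_mul_mem_pow hJ (fun hxJ => hl x hxJ hx) (h.mem_pow x hx)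
  sub_mem := by
    have hlu : linForm (l - u) ∈ pointIdeal (p x₀) := linForm_mem_pointIdeal (by simp [hx₀, hu])
    have hF := h.sub_mem
    rw [zero_add, pow_one] at hF ⊢
    rw [show linForm l * F - linForm u ^ (t + 1 - 0) * G = linForm l * (F - linForm u ^ (t - 0) * G)
      + linForm (l - u) * (linForm u ^ t * G) by rw [map_sub, Nat.sub_zero, Nat.sub_zero]; ring]
    exact add_mem (Ideal.mul_mem_left _ _ hF) (Ideal.mul_mem_right _ _ hlu)

lemma isExtension_sum {σ : Type*} [Fintype σ] {w : σ → Module.Dual K (Fin N → K)}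
    {F G : σ → MvPolynomial (Fin N) K} {J : σ → Finset ι}
    (h : ∀ x, IsExtension p x₀ u (dropOn (J x) d) t i (G x) (F x))
    (hJ : ∀ x, ∀ y ∈ J x, 1 ≤ d y) (hw : ∀ x, ∀ y ∉ J x, w x (p y) = 0)
    (hJx₀ : ∀ x, x₀ ∉ J x) :
    IsExtension p x₀ u d (t + 1) (i + 1) (∑ x, linForm (w x) * G x)
      (∑ x, linForm (w x) * F x) where
  isHomogeneous := by
    rw [add_comm]
    exact IsHomogeneous.sum _ _ _ fun x _ => (isHomogeneous_linForm _).mul (h x).isHomogeneous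
  mem_pow y hy := sum_mem fun x _ =>
    linForm_mul_mem_pow (hJ x) (hw x y) ((h x).mem_pow y hy)
  sub_mem := by
    rw [Nat.add_sub_add_right, Finset.mul_sum, ← Finset.sum_sub_distrib]
    refine sum_mem fun x _ => ?_
    rw [show linForm (w x) * F x - linForm u ^ (t - i) * (linForm (w x) * G x) =
      linForm (w x) * (F x - linForm u ^ (t - i) * G x) by ring, pow_succ']
    exact Ideal.mul_mem_mul (linForm_mem_pointIdeal (hw x x₀ (hJx₀ x))) (h x).sub_mem

/-- The conditions on the weights `d` under which every form of degree `i` is the leading form at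
`p x₀` of an extension of degree `t`. -/
structure Admissible [Fintype ι] (p : ι → Fin N → K) (x₀ : ι) (d : ι → ℕ) (t i : ℕ) : Prop where
  eq_zero : d x₀ = 0
  le : ∀ x ≠ x₀, i ≤ d x
  segreCondition : SegreCondition (relCoeff p) d t i

lemma Admissible.notMem [Fintype ι] {J : Finset ι} (h : Admissible p x₀ d t i)
    (hJ : ∀ x ∈ J, 1 ≤ d x) : x₀ ∉ J := fun hx₀ => by
  have := hJ x₀ hx₀
  rw [h.eq_zero] at this
  lia

open Classical in
lemma Admissible.one_le_of_mem_insert [Fintype ι] {J : Finset ι} {x : ι}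
    (h : Admissible p x₀ d t (i + 1)) (hx : x ≠ x₀) (hJ : ∀ y ∈ J, 1 ≤ d y) :
    ∀ y ∈ insert x J, 1 ≤ d y :=
  (Finset.forall_mem_insert ..).mpr ⟨(Nat.le_add_left 1 i).trans (h.le x hx), hJ⟩

open Classical in
lemma Admissible.dropOn_insert [Fintype ι] {J : Finset ι} {x : ι}
    (h : Admissible p x₀ d (t + 1) (i + 1)) (hJ : ∀ y ∈ insert x J, 1 ≤ d y)
    (hseg : SegreCondition (relCoeff p) (dropOn J d) t (i + 1)) :
    Admissible p x₀ (dropOn (insert x J) d) t i where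
  eq_zero := by simp [dropOn, h.eq_zero]
  le y hy := by
    have := h.le y hy
    rw [dropOn]
    split <;> lia
  segreCondition := hseg.dropOn_insert hJ

theorem exists_isExtension [Fintype ι] (hp : Submodule.span K (Set.range p) = ⊤)
    (hrel : Module.finrank K (relations p) ≤ 2) (hu : u (p x₀) = 1) (hit : i ≤ t)
    (hd : Admissible p x₀ d t i) (hG : G.IsHomogeneous i) (hGx₀ : G ∈ pointIdeal (p x₀) ^ i) :
    ∃ F, IsExtension p x₀ u d t i G F := by
  classical
  induction t generalizing i d G with
  | zero =>
    obtain rfl : i = 0 := by lia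
    exact ⟨G, isExtension_self hG hd.le⟩
  | succ t ih =>
    obtain rfl | hit : i = t + 1 ∨ i ≤ t := by lia
    · exact ⟨G, isExtension_self hG hd.le⟩
    obtain ⟨J, hJ, hseg⟩ := hd.segreCondition.exists_dropOn hrel hit
    obtain ⟨b, hb⟩ := hJ.exists_basis hp
    have hx₀ : x₀ ∉ J := hd.notMem hJ.one_le
    have hdual {x y} (hy : y ∉ J) (hxy : y ≠ x.1) : b.coord x (p y) = 0 := by
      rw [← hb ⟨y, hy⟩]
      simpa using Finsupp.single_eq_of_ne fun h => hxy (congrArg Subtype.val h).symm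
    cases i with
    | zero =>
      obtain ⟨F, hF⟩ := ih (Nat.zero_le t) ⟨by simp [dropOn, hd.eq_zero], by simp, hseg⟩ hG hGx₀
      refine ⟨_, hF.linForm_mul (l := b.coord ⟨x₀, hx₀⟩) hJ.one_le
        (fun _ hy hne => hdual hy hne) ?_ hu⟩
      rw [← hb ⟨x₀, hx₀⟩]
      simp
    | succ i =>
      obtain ⟨G', hG', hG'x₀, rfl⟩ := exists_eq_sum_linForm_mul
        (hb ⟨x₀, hx₀⟩ ▸ span_coord_eq_ker_eval b ⟨x₀, hx₀⟩) hG hGx₀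
      have hinsert {x : {x // x ∉ J}} (hx : x ≠ ⟨x₀, hx₀⟩) : ∀ y ∈ insert x.1 J, 1 ≤ d y :=
        hd.one_le_of_mem_insert (fun h => hx (Subtype.ext h)) hJ.one_le
      choose F hF using fun x : {x : {x // x ∉ J} // x ≠ ⟨x₀, hx₀⟩} =>
        ih (by lia) (hd.dropOn_insert (hinsert x.2) hseg) (hG' x) (hG'x₀ x)
      refine ⟨_, isExtension_sum hF (fun x => hinsert x.2) (fun x y hy => ?_)
        fun x => hd.notMem (hinsert x.2)⟩
      rw [Finset.mem_insert, not_or] at hy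
      exact hdual hy.2 hy.1

end Construction

section UpperBound

variable {K : Type} [Field K] {ι : Type*} [Fintype ι] {N : ℕ} {p : ι → Fin N → K} {m : ι → ℕ}
  {t : ℕ}

open Classical in
/-- The weights for which an extension of degree `t` vanishes to order `m x` at every point `p x`
other than `p x₀`. -/
def vanishingWeight (m : ι → ℕ) (t : ℕ) (x₀ x : ι) : ℕ :=
  if x = x₀ then 0 else t - m x

lemma admissible_vanishingWeight {x₀ : ι} {k : ℕ} (hk : k < m x₀)
    (hm : ∀ x ≠ x₀, m x + m x₀ ≤ t + 1)
    (hseg : SegreCondition (relCoeff p) (vanishingWeight m t x₀) t (m x₀ - 1)) :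
    Admissible p x₀ (vanishingWeight m t x₀) t k where
  eq_zero := by simp [vanishingWeight]
  le x hx := by
    have := hm x hx
    rw [vanishingWeight, if_neg hx]
    lia
  segreCondition Z hZ := le_trans (by lia) (hseg Z hZ)

lemma exists_sub_mem_pow (hp : Submodule.span K (Set.range p) = ⊤)
    (hrel : Module.finrank K (relations p) ≤ 2) {x₀ : ι} (hpx₀ : p x₀ ≠ 0) (hmx₀ : m x₀ ≤ t + 1)
    (hm : ∀ x ≠ x₀, m x + m x₀ ≤ t + 1)
    (hseg : SegreCondition (relCoeff p) (vanishingWeight m t x₀) t (m x₀ - 1))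
    {k : ℕ} (hk : k ≤ m x₀) {f : MvPolynomial (Fin N) K} (hf : f.IsHomogeneous t)
    (hfk : f ∈ pointIdeal (p x₀) ^ k) :
    ∃ F : MvPolynomial (Fin N) K, F.IsHomogeneous t ∧ F - f ∈ pointIdeal (p x₀) ^ m x₀ ∧
      ∀ x ≠ x₀, F ∈ pointIdeal (p x) ^ m x := by
  obtain ⟨u, hu⟩ := Module.Projective.exists_dual_eq_one K hpx₀
  induction hk using Nat.decreasingInduction generalizing f with
  | self => exact ⟨0, isHomogeneous_zero _ _ _, by simpa using hfk, by simp⟩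
  | of_succ k hk ih =>
    have hkt : k ≤ t := by lia
    obtain ⟨G, hG, hGk, hfG⟩ := exists_leadingForm hu hkt hf hfk
    obtain ⟨F₁, hF₁⟩ := exists_isExtension hp hrel hu hkt
      (admissible_vanishingWeight hk hm hseg) hG hGk
    have hsub : f - F₁ ∈ pointIdeal (p x₀) ^ (k + 1) := by
      simpa using sub_mem hfG hF₁.sub_mem
    obtain ⟨F₂, hF₂, hF₂x₀, hF₂m⟩ := ih (hf.sub hF₁.isHomogeneous) hsub
    refine ⟨F₁ + F₂, hF₁.isHomogeneous.add hF₂, by convert hF₂x₀ using 1; ring, fun x hx =>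
      add_mem ?_ (hF₂m x hx)⟩
    have := hm x hx
    have hF₁x := hF₁.mem_pow x hx
    rwa [vanishingWeight, if_neg hx, show t - (t - m x) = m x by lia] at hF₁x

theorem separatesJets_of_segreCondition (hp : Submodule.span K (Set.range p) = ⊤)
    (hrel : Module.finrank K (relations p) ≤ 2) (hp₀ : ∀ x, p x ≠ 0) (hmt : ∀ x, m x ≤ t + 1)
    (hm : Pairwise fun x y => m x + m y ≤ t + 1)
    (hseg : ∀ x, SegreCondition (relCoeff p) (vanishingWeight m t x) t (m x - 1)) :
    SeparatesJets p m t := by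
  classical
  intro f hf
  choose F hF hFx hFy using fun x => exists_sub_mem_pow hp hrel (hp₀ x) (hmt x)
    (fun y hy => hm hy) (hseg x) (Nat.zero_le _) (hf x) (by simp)
  refine ⟨∑ x, F x, IsHomogeneous.sum _ _ _ fun x _ => hF x, fun x => ?_⟩
  rw [← Finset.add_sum_erase _ _ (Finset.mem_univ x), add_sub_right_comm]
  exact add_mem (hFx x) (sum_mem fun y hy => hFy y x (Finset.ne_of_mem_erase hy).symm)

end UpperBound

section SegreBound

variable {K : Type} [Field K] {n s t : ℕ} {p : Fin s → Fin (n + 1) → K} {m : Fin s → ℕ}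

lemma segreBound_le_iff : segreBound n p m ≤ t ↔ ∀ j ∈ Finset.Icc 1 n, ∀ Q : Finset (Fin s),
    Q.Nonempty → OnLinearSubspace p Q j → ∑ i ∈ Q, m i ≤ j * t + 1 := by
  classical
  simp only [segreBound, Finset.sup_le_iff]
  refine forall₂_congr fun j hj => ?_
  have hj1 : 0 < j := (Finset.mem_Icc.mp hj).1
  simp only [Finset.powerset_univ, Finset.mem_univ, forall_const]
  refine forall_congr' fun Q => ?_
  split_ifs with hQ
  · rw [forall_prop_of_true hQ.1, forall_prop_of_true hQ.2, ← Nat.lt_add_one_iff,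
      Nat.div_lt_iff_lt_mul hj1, mul_comm, mul_add_one]
    lia
  · simp only [Nat.zero_le, true_iff]
    exact fun h h' => absurd ⟨h, h'⟩ hQ

lemma sum_le_mul_segreBound {j : ℕ} (hj : 1 ≤ j) (hjn : j ≤ n) {Q : Finset (Fin s)}
    (hQ : Q.Nonempty) (h : OnLinearSubspace p Q j) : ∑ i ∈ Q, m i ≤ j * segreBound n p m + 1 :=
  segreBound_le_iff.mp le_rfl j (Finset.mem_Icc.mpr ⟨hj, hjn⟩) Q hQ h

lemma ProjDistinct.linearIndependent_pair {N : ℕ} {p : Fin s → Fin N → K} (hp : ProjDistinct p)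
    {x y : Fin s} (hxy : x ≠ y) : LinearIndependent K ![p x, p y] :=
  (LinearIndependent.pair_iff' (hp.1 x)).mpr fun c hc => hp.2 y x hxy.symm c hc.symm

lemma two_le_finrank_of_mem {E : Type*} [AddCommGroup E] [Module K E] {v w : E}
    (h : LinearIndependent K ![v, w]) {W : Submodule K E} [FiniteDimensional K W] (hv : v ∈ W)
    (hw : w ∈ W) : 2 ≤ Module.finrank K W := by
  have hle : Submodule.span K (Set.range ![v, w]) ≤ W :=
    Submodule.span_le.mpr <| Set.range_subset_iff.mpr fun i => by fin_cases i <;> assumption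
  simpa [finrank_span_eq_card h] using Submodule.finrank_mono hle

lemma finrank_span_image_add_le {K ι : Type*} [Field K] [Fintype ι] {N : ℕ} {p : ι → Fin N → K}
    {Z : Submodule K (relations p)} {Q : Finset ι} (hQ : dualSupport (relCoeff p) Z ⊆ Q) :
    Module.finrank K (Submodule.span K (p '' Q)) + Module.finrank K Z ≤ Q.card := by
  have hzero {φ : relations p} (hφ : φ ∈ Z) {x : ι} (hx : x ∉ Q) : φ.1 x = 0 := by
    by_contra h
    exact hx (hQ (mem_dualSupport.mpr fun hle => h (hle hφ)))
  have hrange : Set.range (fun y : Q => p y) = p '' Q := (Set.image_eq_range ..).symm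
  have hcard := finrank_span_add_finrank_relations fun y : Q => p y
  rw [hrange, Fintype.card_coe] at hcard
  let restrict : (ι → K) →ₗ[K] (Q → K) := LinearMap.funLeft K K Subtype.val
  have hrestrict : ∀ φ ∈ Z.map (relations p).subtype, restrict φ ∈ relations fun y : Q => p y := by
    rintro _ ⟨φ, hφ, rfl⟩
    rw [mem_relations, ← mem_relations.mp φ.2,
      ← Finset.sum_subset (Finset.subset_univ Q) fun x _ hx => by rw [hzero hφ hx, zero_smul]]
    exact Finset.sum_coe_sort Q fun x => φ.1 x • p x
  have hinj : Function.Injective (restrict.restrict hrestrict) := by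
    rw [← LinearMap.ker_eq_bot, LinearMap.ker_eq_bot']
    rintro ⟨_, φ, hφ, rfl⟩ h
    refine Subtype.ext <| funext fun x => ?_
    by_cases hx : x ∈ Q
    · exact congrFun (congrArg Subtype.val h) ⟨x, hx⟩
    · exact hzero hφ hx
  have hle := LinearMap.finrank_le_finrank_of_injective hinj
  rw [Submodule.finrank_map_subtype_eq] at hle
  lia

lemma segreCondition_segreBound (hp : ProjDistinct p) {x₀ : Fin s} (hm : 0 < m x₀) :
    SegreCondition (relCoeff p) (vanishingWeight m (segreBound n p m) x₀) (segreBound n p m)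
      (m x₀ - 1) := by
  classical
  intro Z hZ
  set t := segreBound n p m
  set A := (dualSupport (relCoeff p) Z).erase x₀
  set Q := insert x₀ A
  set W := Submodule.span K (p '' Q)
  have hW (x) (hx : x ∈ Q) : p x ∈ W := Submodule.subset_span ⟨x, hx, rfl⟩
  have hQ : Q.card = A.card + 1 := Finset.card_insert_of_notMem (by simp [A])
  have hrank : Module.finrank K W + Module.finrank K Z ≤ Q.card :=
    finrank_span_image_add_le (Finset.insert_erase_subset _ _)
  have hZ1 := Submodule.one_le_finrank_iff.mpr hZ
  have hW2 : 2 ≤ Module.finrank K W := by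
    have hW1 : 1 ≤ Module.finrank K W := Submodule.one_le_finrank_iff.mpr <|
      (Submodule.ne_bot_iff _).mpr ⟨p x₀, hW x₀ (by simp [Q]), hp.1 x₀⟩
    obtain ⟨y, hy⟩ : A.Nonempty := Finset.card_pos.mp (by lia)
    exact two_le_finrank_of_mem (hp.linearIndependent_pair (Finset.ne_of_mem_erase hy))
      (hW y (by simp [Q, hy])) (hW x₀ (by simp [Q]))
  have hWn : Module.finrank K W ≤ n + 1 := by simpa using Submodule.finrank_le W
  have hsegre : ∑ x ∈ Q, m x ≤ (Module.finrank K W - 1) * t + 1 :=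
    sum_le_mul_segreBound (by lia) (by lia) ⟨x₀, by simp [Q]⟩ ⟨W, by lia, hW⟩
  rw [Finset.sum_insert (by simp [A])] at hsegre
  have hweight : A.card * t ≤ ∑ x ∈ A, vanishingWeight m t x₀ x + ∑ x ∈ A, m x := by
    rw [← Finset.sum_add_distrib, ← smul_eq_mul, ← Finset.sum_const]
    refine Finset.sum_le_sum fun x hx => ?_
    rw [vanishingWeight, if_neg (Finset.ne_of_mem_erase hx)]
    lia
  have hA : ∑ x ∈ A, vanishingWeight m t x₀ x =
      ∑ x ∈ dualSupport (relCoeff p) Z, vanishingWeight m t x₀ x :=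
    Finset.sum_erase _ (by simp [vanishingWeight])
  have hmul : (Module.finrank K W - 1) * t + Module.finrank K Z * t ≤ A.card * t := by
    rw [← add_mul]
    exact Nat.mul_le_mul_right t (by lia)
  lia

lemma add_le_segreBound_add_one (hn : 0 < n) {x y : Fin s} (hxy : x ≠ y) :
    m x + m y ≤ segreBound n p m + 1 := by
  classical
  rw [← one_mul (segreBound n p m), ← Finset.sum_pair hxy]
  have hrank := finrank_span_finset_le_card (R := K) ({p x, p y} : Finset (Fin (n + 1) → K))
  refine sum_le_mul_segreBound le_rfl hn (by simp)
    ⟨_, hrank.trans Finset.card_le_two, fun z hz => Submodule.subset_span ?_⟩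
  rcases Finset.mem_insert.mp hz with rfl | hz
  · simp
  · simp [Finset.mem_singleton.mp hz]

theorem separatesJets_segreBound (hn : 0 < n) (hs : s ≤ n + 3) (hp : ProjDistinct p)
    (hspan : Submodule.span K (Set.range p) = ⊤) (hm : ∀ i, 0 < m i) :
    (∀ i, m i ≤ segreBound n p m + 1) ∧ SeparatesJets p m (segreBound n p m) := by
  have hrank := finrank_relations hspan
  rw [Fintype.card_fin] at hrank
  have : Nontrivial (Fin s) := Fin.nontrivial_iff_two_le.mpr (by lia)
  have hpair : Pairwise fun x y => m x + m y ≤ segreBound n p m + 1 :=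
    fun x y hxy => add_le_segreBound_add_one hn hxy
  have hmt (x) : m x ≤ segreBound n p m + 1 :=
    have ⟨y, hy⟩ := exists_ne x
    (Nat.le_add_right _ _).trans (hpair hy.symm)
  exact ⟨hmt, separatesJets_of_segreCondition hspan (by lia) hp.1 hmt hpair fun i =>
    segreCondition_segreBound hp (hm i)⟩

end SegreBound

/-! ### Rational normal curves -/

section Curve

variable {K : Type} [Field K] {N : ℕ} {v : Fin N → K} {F : MvPolynomial (Fin N) K}
  {φ : MvPolynomial (Fin N) K →ₐ[K] Polynomial K}

lemma X_sub_C_pow_dvd_of_mem_pointIdeal_pow {ν : K} {m : ℕ}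
    (hφ : ∀ l, l v = 0 → (φ (linForm l)).IsRoot ν) (hF : F ∈ pointIdeal v ^ m) :
    (Polynomial.X - Polynomial.C ν) ^ m ∣ φ F := by
  have hle : pointIdeal v ≤ (Ideal.span {Polynomial.X - Polynomial.C ν}).comap φ :=
    pointIdeal_le fun l hl =>
      Ideal.mem_span_singleton.mpr (Polynomial.dvd_iff_isRoot.mpr (hφ l hl))
  rw [← Ideal.mem_span_singleton, ← Ideal.span_singleton_pow]
  exact Ideal.le_comap_pow φ m (Ideal.pow_right_mono hle m hF)

lemma natDegree_le_of_mem_pointIdeal_pow {d k m : ℕ}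
    (hφ : ∀ l, (φ (linForm l)).natDegree ≤ d + 1)
    (hv : ∀ l, l v = 0 → (φ (linForm l)).natDegree ≤ d)
    (hF : F.IsHomogeneous (k + m)) (hFv : F ∈ pointIdeal v ^ m) :
    (φ F).natDegree ≤ (d + 1) * k + d * m := by
  induction m generalizing F with
  | zero =>
    rw [aeval_unique φ, mul_zero, add_zero, mul_comm]
    refine MvPolynomial.aeval_natDegree_le F hF.totalDegree_le _ fun i => ?_
    simpa only [Function.comp_apply, ← linForm_proj] using hφ (LinearMap.proj i)
  | succ m ih =>
    obtain ⟨r, w, hw⟩ := Submodule.fg_iff_exists_fin_generating_family.mp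
      (IsNoetherian.noetherian (LinearMap.ker (Module.Dual.eval K (Fin N → K) v)))
    have hwv (x) : w x v = 0 := hw.le (Submodule.subset_span ⟨x, rfl⟩)
    obtain ⟨G, hG, hGv, rfl⟩ := exists_eq_sum_linForm_mul hw hF hFv
    rw [map_sum]
    refine Polynomial.natDegree_sum_le_of_forall_le _ _ fun x _ => ?_
    rw [map_mul]
    calc (φ (linForm (w x)) * φ (G x)).natDegree
        ≤ d + ((d + 1) * k + d * m) :=
          Polynomial.natDegree_mul_le_of_le (hv _ (hwv x)) (ih (hG x) (hGv x))
      _ = (d + 1) * k + d * (m + 1) := by ring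

variable {ι σ : Type*} [Fintype σ] {p : ι → Fin N → K} {m t d : ℕ}

open Classical in
/-- The jet at `y` is prescribed to have order exactly `m - 1` along the curve `φ`, so that the
restriction of the interpolating form to the curve is a nonzero polynomial. -/
lemma SeparatesJets.mul_card_add_one_le_of_curve (h : SeparatesJets p (fun _ => m) t)
    (hm : 0 < m) (hmt : m ≤ t) {y : ι} {q : σ → ι} (hqy : ∀ i, q i ≠ y)
    {ν : σ → K} (hν : Function.Injective ν)
    (hφ : ∀ l, (φ (linForm l)).natDegree ≤ d + 1)
    (hq : ∀ i l, l (p (q i)) = 0 → (φ (linForm l)).IsRoot (ν i))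
    (hy : ∀ l, l (p y) = 0 → (φ (linForm l)).natDegree ≤ d)
    {u l : Module.Dual K (Fin N → K)} (hu : (φ (linForm u)).natDegree = d + 1)
    (hl : (φ (linForm l)).natDegree = d) (hl₀ : φ (linForm l) ≠ 0) :
    m * (Fintype.card σ + 1) ≤ (d + 1) * t + 1 := by
  obtain ⟨m, rfl⟩ := Nat.exists_eq_add_one_of_ne_zero hm.ne'
  obtain ⟨k, rfl⟩ := Nat.exists_eq_add_of_le' hmt
  set J := linForm u ^ (k + 1) * linForm l ^ m with hJ
  have hJt : J.IsHomogeneous (k + (m + 1)) :=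
    isHomogeneous_linForm_pow_mul ((isHomogeneous_linForm l).pow m) (by lia)
  obtain ⟨F, hF, hFJ⟩ := h (Function.update 0 y J) fun i => by
    rcases eq_or_ne i y with rfl | hi
    · simpa using hJt
    · simpa [hi] using isHomogeneous_zero _ _ _
  have hJdeg : (φ J).natDegree = (d + 1) * (k + 1) + d * m := by
    have hu₀ : φ (linForm u) ≠ 0 := Polynomial.ne_zero_of_natDegree_gt (n := d) (by lia)
    rw [hJ, map_mul, map_pow, map_pow,
      Polynomial.natDegree_mul (pow_ne_zero _ hu₀) (pow_ne_zero _ hl₀),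
      Polynomial.natDegree_pow, Polynomial.natDegree_pow, hu, hl]
    ring
  have hdeg : (φ (F - J)).natDegree < (φ J).natDegree := by
    have hFy : F - J ∈ pointIdeal (p y) ^ (m + 1) := by simpa using hFJ y
    have := natDegree_le_of_mem_pointIdeal_pow hφ hy (hF.sub hJt) hFy
    lia
  have hFdeg : (φ F).natDegree = (φ J).natDegree := by
    rw [← sub_add_cancel F J, map_add, Polynomial.natDegree_add_eq_right_of_natDegree_lt hdeg]
  have hdvd : ∏ i, (Polynomial.X - Polynomial.C (ν i)) ^ (m + 1) ∣ φ F := by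
    refine Fintype.prod_dvd_of_coprime
      (fun i j hij => (Polynomial.pairwise_coprime_X_sub_C hν hij).pow) fun i => ?_
    refine X_sub_C_pow_dvd_of_mem_pointIdeal_pow (hq i) ?_
    simpa [hqy i] using hFJ (q i)
  have hF₀ : φ F ≠ 0 := Polynomial.ne_zero_of_natDegree_gt (by rw [hFdeg]; exact hdeg)
  have hcard := Polynomial.natDegree_le_of_dvd hdvd hF₀
  rw [Finset.prod_pow, Polynomial.natDegree_pow, ← Lagrange.nodal, Lagrange.natDegree_nodal,
    Finset.card_univ] at hcard
  lia

end Curve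

section RationalNormalCurve

variable {K : Type} [Field K] {N : ℕ} {σ : Type*} [Fintype σ] [DecidableEq σ]

/-- The rational normal curve `T ↦ ∑ i, ∏ k ≠ i, (T - ρ k) • b i`, encoded by the pullback of
forms along it. It passes through `b i` at `T = ρ i` and through `∑ i, b i` at `T = ∞`. -/
def rationalNormalCurve (b : σ → Fin N → K) (ρ : σ → K) :
    MvPolynomial (Fin N) K →ₐ[K] Polynomial K :=
  aeval fun k => ∑ i, Polynomial.C (b i k) * Lagrange.nodal (Finset.univ.erase i) ρ

variable (b : σ → Fin N → K) (ρ : σ → K) {l : Module.Dual K (Fin N → K)}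

lemma rationalNormalCurve_linForm (l : Module.Dual K (Fin N → K)) :
    rationalNormalCurve b ρ (linForm l) =
      ∑ i, Polynomial.C (l (b i)) * Lagrange.nodal (Finset.univ.erase i) ρ := by
  simp only [rationalNormalCurve, linForm_apply, map_sum, map_smul, aeval_X, Finset.smul_sum,
    apply_eq_sum_single l (b _), Finset.sum_mul, Polynomial.smul_eq_C_mul, map_mul]
  rw [Finset.sum_comm]
  exact Finset.sum_congr rfl fun i _ => Finset.sum_congr rfl fun k _ => by ring

lemma natDegree_rationalNormalCurve_le {d : ℕ} (hσ : Fintype.card σ = d + 1) :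
    (rationalNormalCurve b ρ (linForm l)).natDegree ≤ d := by
  rw [rationalNormalCurve_linForm]
  refine Polynomial.natDegree_sum_le_of_forall_le _ _ fun i _ =>
    (Polynomial.natDegree_C_mul_le _ _).trans ?_
  simp [Lagrange.natDegree_nodal, hσ]

lemma natDegree_rationalNormalCurve_le_of_apply_sum_eq_zero {d : ℕ}
    (hσ : Fintype.card σ = d + 2) (hl : l (∑ i, b i) = 0) :
    (rationalNormalCurve b ρ (linForm l)).natDegree ≤ d := by
  refine Polynomial.natDegree_le_pred (natDegree_rationalNormalCurve_le b ρ hσ) ?_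
  have hcoeff (i : σ) : (Lagrange.nodal (Finset.univ.erase i) ρ).coeff (d + 1) = 1 := by
    have := (Lagrange.nodal_monic (s := Finset.univ.erase i) (v := ρ)).coeff_natDegree
    simpa [Lagrange.natDegree_nodal, hσ] using this
  simp only [rationalNormalCurve_linForm, Polynomial.finsetSum_coeff, Polynomial.coeff_C_mul,
    hcoeff, mul_one, ← map_sum, hl]

lemma isRoot_rationalNormalCurve_node {j : σ} (hl : l (b j) = 0) :
    (rationalNormalCurve b ρ (linForm l)).IsRoot (ρ j) := by
  rw [rationalNormalCurve_linForm, Polynomial.IsRoot, Polynomial.eval_finsetSum]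
  refine Finset.sum_eq_zero fun i _ => ?_
  rw [Polynomial.eval_C_mul]
  rcases eq_or_ne i j with rfl | hij
  · rw [hl, zero_mul]
  · rw [Lagrange.eval_nodal_at_node (Finset.mem_erase.mpr ⟨hij.symm, Finset.mem_univ j⟩), mul_zero]

lemma isRoot_rationalNormalCurve_zero (hρ : ∀ i, ρ i ≠ 0) (hl : l (∑ i, (ρ i)⁻¹ • b i) = 0) :
    (rationalNormalCurve b ρ (linForm l)).IsRoot 0 := by
  have heval (i : σ) :
      (Lagrange.nodal (Finset.univ.erase i) ρ).eval 0 = (ρ i)⁻¹ * -∏ k, -ρ k := by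
    rw [Lagrange.eval_nodal, ← Finset.mul_prod_erase _ _ (Finset.mem_univ i)]
    simp [hρ i]
  simp only [map_sum, map_smul, smul_eq_mul] at hl
  rw [rationalNormalCurve_linForm, Polynomial.IsRoot, Polynomial.eval_finsetSum]
  calc ∑ i, (Polynomial.C (l (b i)) * Lagrange.nodal (Finset.univ.erase i) ρ).eval 0
      = (∑ i, (ρ i)⁻¹ * l (b i)) * -∏ k, -ρ k := by
        rw [Finset.sum_mul]
        refine Finset.sum_congr rfl fun i _ => ?_
        rw [Polynomial.eval_C_mul, heval]
        ring
    _ = 0 := by rw [hl, zero_mul]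

lemma rationalNormalCurve_linForm_coord (b : Module.Basis σ K (Fin N → K)) (i : σ) :
    rationalNormalCurve b ρ (linForm (b.coord i)) = Lagrange.nodal (Finset.univ.erase i) ρ := by
  simp [rationalNormalCurve_linForm, Finsupp.single_apply, apply_ite Polynomial.C]

lemma rationalNormalCurve_linForm_coord_sub_coord (b : Module.Basis σ K (Fin N → K)) {i k : σ}
    (hik : i ≠ k) :
    rationalNormalCurve b ρ (linForm (b.coord i - b.coord k)) =
      Polynomial.C (ρ i - ρ k) * Lagrange.nodal ((Finset.univ.erase i).erase k) ρ := by
  rw [map_sub, map_sub, rationalNormalCurve_linForm_coord, rationalNormalCurve_linForm_coord,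
    Lagrange.nodal_eq_mul_nodal_erase (Finset.mem_erase.mpr ⟨hik.symm, Finset.mem_univ k⟩),
    Lagrange.nodal_eq_mul_nodal_erase (Finset.mem_erase.mpr ⟨hik, Finset.mem_univ i⟩),
    Finset.erase_right_comm, map_sub]
  ring

end RationalNormalCurve

section FewPointsOnCurve

variable {K : Type} [Field K] {N : ℕ} {ι : Type*} {p : ι → Fin N → K} {m t d : ℕ}

lemma SeparatesJets.mul_add_four_le_of_rationalNormalCurve {σ : Type*} [Fintype σ]
    (h : SeparatesJets p (fun _ => m) t) (hm : 0 < m) (hmt : m ≤ t)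
    (hσ : Fintype.card σ = d + 2) {b : Module.Basis σ K (Fin N → K)} {ρ : σ → K}
    (hρ : Function.Injective ρ) (hρ₀ : ∀ i, ρ i ≠ 0) {q : σ → ι} {y z : ι} (hqy : ∀ i, q i ≠ y)
    (hzy : z ≠ y) (hq : ∀ i, ∃ c : K, b i = c • p (q i)) (hy : p y = ∑ i, b i)
    (hz : p z = ∑ i, (ρ i)⁻¹ • b i) :
    m * (d + 4) ≤ (d + 1) * t + 1 := by
  classical
  obtain ⟨i, k, hik⟩ := Fintype.exists_pair_of_one_lt_card (α := σ) (by lia)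
  have hρik : ρ i - ρ k ≠ 0 := sub_ne_zero.mpr (hρ.ne hik)
  have hcard := h.mul_card_add_one_le_of_curve hm hmt (y := y)
    (q := fun x : Option σ => x.elim z q) (ν := fun x => x.elim 0 ρ)
    (φ := rationalNormalCurve b ρ) (u := b.coord i) (l := b.coord i - b.coord k)
    (Option.rec hzy hqy) ?_ (fun l => natDegree_rationalNormalCurve_le b ρ hσ) ?_ ?_ ?_ ?_ ?_
  · rwa [Fintype.card_option, hσ] at hcard
  · rintro (_ | i) (_ | j) hij
    · rfl
    · exact absurd hij.symm (hρ₀ j)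
    · exact absurd hij (hρ₀ i)
    · exact congrArg some (hρ hij)
  · rintro (_ | j) l hl
    · exact isRoot_rationalNormalCurve_zero b ρ hρ₀ (hz ▸ hl)
    · obtain ⟨c, hc⟩ := hq j
      refine isRoot_rationalNormalCurve_node b ρ ?_
      rw [hc, map_smul]
      exact smul_eq_zero_of_right c hl
  · exact fun l hl => natDegree_rationalNormalCurve_le_of_apply_sum_eq_zero b ρ hσ (hy ▸ hl)
  · simp [rationalNormalCurve_linForm_coord, Lagrange.natDegree_nodal, hσ]
  · rw [rationalNormalCurve_linForm_coord_sub_coord ρ b hik, Polynomial.natDegree_C_mul hρik,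
      Lagrange.natDegree_nodal, Finset.card_erase_of_mem (by simp [hik.symm]),
      Finset.card_erase_of_mem (Finset.mem_univ i), Finset.card_univ, hσ]
    rfl
  · rw [rationalNormalCurve_linForm_coord_sub_coord ρ b hik]
    exact mul_ne_zero (Polynomial.C_ne_zero.mpr hρik) Lagrange.nodal_ne_zero

lemma SeparatesJets.mul_add_four_le_of_injective_ratio {σ : Type*} [Fintype σ]
    (h : SeparatesJets p (fun _ => m) t) (hm : 0 < m) (hmt : m ≤ t)
    (hσ : Fintype.card σ = d + 2) {b : Module.Basis σ K (Fin N → K)} {q : σ → ι}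
    (hb : ∀ i, b i = p (q i)) {y z : ι} (hqy : ∀ i, q i ≠ y) (hzy : z ≠ y)
    (hy : ∀ i, b.coord i (p y) ≠ 0) (hz : ∀ i, b.coord i (p z) ≠ 0)
    (hinj : Function.Injective fun i => b.coord i (p y) / b.coord i (p z)) :
    m * (d + 4) ≤ (d + 1) * t + 1 := by
  let b' := b.isUnitSMul fun i => (hy i).isUnit
  have hb' (i) : b' i = b.coord i (p y) • b i := Module.Basis.isUnitSMul_apply _ i
  have hsum (x) : p x = ∑ i, b.coord i (p x) • b i := (b.sum_repr _).symm
  refine h.mul_add_four_le_of_rationalNormalCurve hm hmt hσ (b := b') hinj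
    (fun i => div_ne_zero (hy i) (hz i)) hqy hzy (fun i => ⟨_, (hb' i).trans (by rw [hb])⟩) ?_ ?_
  · simpa only [hb'] using hsum y
  · simpa only [hb', inv_div, smul_smul, div_mul_cancel₀ _ (hy _)] using hsum z

lemma exists_equiv_basis_of_card_eq [Fintype ι] (hp : Submodule.span K (Set.range p) = ⊤)
    (hι : Fintype.card ι = N + 2) :
    ∃ (e : Fin N ⊕ Bool ≃ ι) (b : Module.Basis (Fin N) K (Fin N → K)),
      ∀ i, b i = p (e (Sum.inl i)) := by
  classical
  obtain ⟨κ, a, ha, hspan, hli⟩ := exists_linearIndependent' K p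
  let b := Module.Basis.mk hli (hspan.trans hp).ge
  let f := b.indexEquiv (Pi.basisFun K (Fin N))
  have hq : Function.Injective (a ∘ f.symm) := ha.comp f.symm.injective
  have hcompl : Fintype.card ↥(Set.range (a ∘ f.symm))ᶜ = Fintype.card Bool := by
    rw [Fintype.card_compl_set, Set.card_range_of_injective hq, hι]
    simp
  exact ⟨((Equiv.ofInjective _ hq).sumCongr (Fintype.equivOfCardEq hcompl).symm).trans
    (Equiv.Set.sumCompl _), b.reindex f, fun i => by simp [b]⟩

lemma SeparatesJets.mul_add_four_le_or_exists_dual [Fintype ι] {p : ι → Fin (d + 2) → K}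
    (h : SeparatesJets p (fun _ => m) t) (hm : 0 < m) (hmt : m ≤ t)
    (hp : Submodule.span K (Set.range p) = ⊤) (hι : Fintype.card ι = d + 4) :
    m * (d + 4) ≤ (d + 1) * t + 1 ∨ ∃ l : Module.Dual K (Fin (d + 2) → K), l ≠ 0 ∧
      ∃ x y, x ≠ y ∧ ∀ i, i ≠ x → i ≠ y → l (p i) = 0 := by
  obtain ⟨e, b, hb⟩ := exists_equiv_basis_of_card_eq hp hι
  have hcoord (i j) (hij : i ≠ j) : b.coord i (p (e (Sum.inl j))) = 0 := by
    simp [← hb, hij.symm]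
  let a := fun i (c : Bool) => b.coord i (p (e (Sum.inr c)))
  by_cases hzero : ∃ i c, a i c = 0
  · obtain ⟨i, c, hic⟩ := hzero
    refine Or.inr ⟨b.coord i, fun h0 => ?_, e (Sum.inl i), e (Sum.inr !c),
      e.injective.ne Sum.inl_ne_inr, e.forall_congr_right.mp ?_⟩
    · simpa using LinearMap.congr_fun h0 (b i)
    · rintro (j | c') hi hc
      · exact hcoord i j fun hij => hi (hij ▸ rfl)
      · obtain rfl : c' = c := by simpa using hc
        exact hic
  push Not at hzero
  by_cases hinj : Function.Injective fun i => a i false / a i true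
  · exact Or.inl (h.mul_add_four_le_of_injective_ratio hm hmt (Fintype.card_fin _) hb
      (fun i => e.injective.ne Sum.inl_ne_inr) (e.injective.ne (by simp)) (hzero · false)
      (hzero · true) hinj)
  · obtain ⟨i, k, hratio, hik⟩ := Function.not_injective_iff.mp hinj
    have hcross : a k true * a i false = a i true * a k false := by
      rw [div_eq_div_iff (hzero i true) (hzero k true)] at hratio
      linear_combination hratio
    refine Or.inr ⟨a k true • b.coord i - a i true • b.coord k, fun h0 => hzero k true ?_,
      e (Sum.inl i), e (Sum.inl k), e.injective.ne (Sum.inl_injective.ne hik),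
      e.forall_congr_right.mp ?_⟩
    · simpa [hik] using LinearMap.congr_fun h0 (b i)
    · rintro (j | _ | _) hi hk
      · have hij : i ≠ j := fun hij => hi (hij ▸ rfl)
        have hkj : k ≠ j := fun hkj => hk (hkj ▸ rfl)
        simp [hcoord i j hij, hcoord k j hkj]
      · exact sub_eq_zero.mpr hcross
      · exact sub_eq_zero.mpr (mul_comm _ _)

end FewPointsOnCurve

/-! ### Lower bounds from linear sections and cones -/

section LinearSections

variable {K : Type} [Field K] {ι : Type*} {N M n t : ℕ} {p : ι → Fin N → K}

lemma SeparatesJets.of_injective {κ : Type*} {m : ι → ℕ} (h : SeparatesJets p m t)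
    {A : (Fin M → K) →ₗ[K] (Fin N → K)} (hA : Function.Injective A) {α : κ → ι}
    (hα : Function.Injective α) {q : κ → Fin M → K} (hq : ∀ i, A (q i) = p (α i)) :
    SeparatesJets q (m ∘ α) t := by
  obtain ⟨B, hB⟩ := A.exists_leftInverse_of_injective (LinearMap.ker_eq_bot.mpr hA)
  intro f hf
  obtain ⟨F, hF, hFf⟩ := h (Function.extend α (fun i => linSubst B (f i)) 0) fun x => by
    by_cases hx : ∃ i, α i = x
    · obtain ⟨i, rfl⟩ := hx
      rw [hα.extend_apply]
      exact isHomogeneous_linSubst B (hf i)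
    · rw [Function.extend_apply' _ _ _ hx]
      exact isHomogeneous_zero _ _ _
  refine ⟨linSubst A F, isHomogeneous_linSubst A hF, fun i => ?_⟩
  have hi := hFf (α i)
  rw [hα.extend_apply, ← hq i] at hi
  simpa [linSubst_linSubst, hB, linSubst_id] using linSubst_mem_pointIdeal_pow A (q i) hi

lemma exists_injective_range_eq {W : Submodule K (Fin N → K)} (hW : Module.finrank K W = M) :
    ∃ A : (Fin M → K) →ₗ[K] (Fin N → K), Function.Injective A ∧ LinearMap.range A = W := by
  let e : (Fin M → K) ≃ₗ[K] W := LinearEquiv.ofFinrankEq _ _ (by simp [hW])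
  exact ⟨W.subtype ∘ₗ e.toLinearMap, W.injective_subtype.comp e.injective, by
    rw [LinearMap.range_comp_of_range_eq_top _ e.range, W.range_subtype]⟩

lemma SeparatesJets.card_mul_choose_le {m : ℕ} (h : SeparatesJets p (fun _ => m) t) (hm : 0 < m)
    (hmt : m ≤ t + 1) (hp : ∀ i, p i ≠ 0) {W : Submodule K (Fin N → K)}
    (hW : Module.finrank K W = n + 1) {Q : Finset ι} (hQ : ∀ i ∈ Q, p i ∈ W) :
    Q.card * (m + n - 1).choose n ≤ (t + n).choose n := by
  obtain ⟨A, hA, rfl⟩ := exists_injective_range_eq hW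
  choose q hq using fun i : Q => hQ i i.2
  have hq₀ (i) : q i ≠ 0 := fun h0 => hp i (by rw [← hq, h0, map_zero])
  simpa using (h.of_injective hA Subtype.val_injective hq).sum_choose_le hq₀ (fun _ => hm)
    fun _ => hmt

lemma finrank_span_range_pair {V : Type*} [AddCommGroup V] [Module K V] {v w : V}
    (h : LinearIndependent K ![v, w]) :
    Module.finrank K (Submodule.span K (Set.range ![v, w])) = 2 := by
  rw [finrank_span_eq_card h, Fintype.card_fin]

lemma index_ne_of_linearIndependent_pair {x y : ι} (h : LinearIndependent K ![p x, p y]) :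
    x ≠ y := by
  rintro rfl
  exact zero_ne_one (h.injective (a₁ := 0) (a₂ := 1) rfl)

lemma SeparatesJets.two_mul_le {m : ℕ} (h : SeparatesJets p (fun _ => m) t) (hm : 0 < m)
    (hmt : m ≤ t + 1) (hp : ∀ i, p i ≠ 0) {x y : ι} (hxy : LinearIndependent K ![p x, p y]) :
    2 * m ≤ t + 1 := by
  classical
  have hne := index_ne_of_linearIndependent_pair hxy
  have hmem : ∀ i ∈ ({x, y} : Finset ι), p i ∈ Submodule.span K (Set.range ![p x, p y]) := by
    intro i hi
    rcases Finset.mem_insert.mp hi with rfl | hi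
    · exact Submodule.subset_span ⟨0, rfl⟩
    · exact Submodule.subset_span ⟨1, congrArg p (Finset.mem_singleton.mp hi).symm⟩
  simpa [Finset.card_pair hne] using
    h.card_mul_choose_le hm hmt hp (finrank_span_range_pair hxy) hmem

lemma exists_surjective_ker_eq {U : Submodule K (Fin N → K)} (hU : Module.finrank K U + M = N) :
    ∃ B : (Fin N → K) →ₗ[K] (Fin M → K), Function.Surjective B ∧ LinearMap.ker B = U := by
  have hquot := U.finrank_quotient_add_finrank
  let e : ((Fin N → K) ⧸ U) ≃ₗ[K] (Fin M → K) :=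
    LinearEquiv.ofFinrankEq _ _ (by simp at hquot ⊢; lia)
  exact ⟨e.toLinearMap ∘ₗ U.mkQ, e.surjective.comp U.mkQ_surjective, by
    rw [LinearEquiv.ker_comp, U.ker_mkQ]⟩

lemma linSubst_injective {B : (Fin N → K) →ₗ[K] (Fin M → K)} (hB : Function.Surjective B) :
    Function.Injective (linSubst B) := by
  obtain ⟨B', hB'⟩ := B.exists_rightInverse_of_surjective (LinearMap.range_eq_top.mpr hB)
  exact Function.LeftInverse.injective (g := linSubst B') fun F => by
    rw [linSubst_linSubst, hB', linSubst_id]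

lemma linForm_ne_zero {l : Module.Dual K (Fin N → K)} (hl : l ≠ 0) : linForm l ≠ 0 :=
  fun h0 => hl (LinearMap.ext fun z => by rw [← eval_linForm, h0, map_zero, LinearMap.zero_apply])

lemma linSubst_mem_pointIdeal_pow_of_apply_eq_zero {B : (Fin N → K) →ₗ[K] (Fin M → K)}
    {v : Fin N → K} (hv : B v = 0) {F : MvPolynomial (Fin M) K} (hF : F.IsHomogeneous t) :
    linSubst B F ∈ pointIdeal v ^ t := by
  have hle : idealOfVars (Fin M) K ≤ pointIdeal (0 : Fin M → K) :=
    Ideal.span_le.mpr <| Set.range_subset_iff.mpr fun k => by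
      rw [← linForm_proj]
      exact linForm_mem_pointIdeal rfl
  refine linSubst_mem_pointIdeal_pow B v (hv ▸ Ideal.pow_right_mono hle t ?_)
  exact (mem_pow_idealOfVars_iff t F).mpr fun d hd => (hF.degree_eq_sum_deg_support hd).le

lemma exists_isHomogeneous_eval_eq_zero {σ : Type*} [Fintype σ] (w : σ → Fin (n + 1) → K)
    (hσ : Fintype.card σ < (t + n).choose n) :
    ∃ F : MvPolynomial (Fin (n + 1)) K, F.IsHomogeneous t ∧ F ≠ 0 ∧ ∀ i, eval (w i) F = 0 := by
  let E : homogeneousSubmodule (Fin (n + 1)) K t →ₗ[K] (σ → K) :=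
    LinearMap.pi fun i => (aeval (w i)).toLinearMap ∘ₗ Submodule.subtype _
  have hE : LinearMap.ker E ≠ ⊥ := LinearMap.ker_ne_bot_of_finrank_lt <| by
    rwa [Module.finrank_fintype_fun_eq_card, finrank_homogeneousSubmodule]
  obtain ⟨F, hF, hF₀⟩ := (Submodule.ne_bot_iff _).mp hE
  refine ⟨F, F.2, fun h => hF₀ (Subtype.ext h), fun i => ?_⟩
  simpa [E, aeval_eq_eval] using congrFun hF i

lemma SeparatesJets.eq_zero_of_sum_choose_eq [Fintype ι] {p : ι → Fin (n + 1) → K} {m : ι → ℕ}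
    (h : SeparatesJets p m t) (hp : ∀ i, p i ≠ 0) (hm : ∀ i, 0 < m i) (hmt : ∀ i, m i ≤ t + 1)
    (hcount : ∑ i, (m i + n - 1).choose n = (t + n).choose n)
    {F : MvPolynomial (Fin (n + 1)) K} (hF : F.IsHomogeneous t)
    (hFp : ∀ i, F ∈ pointIdeal (p i) ^ m i) : F = 0 := by
  have hdim := (separatesJets_iff_finrank hp hm hmt).mp h
  have hbot := Submodule.finrank_eq_zero.mp (Nat.add_eq_left.mp (hdim.trans hcount.symm))
  have hmem : F ∈ homogeneousSubmodule (Fin (n + 1)) K t ⊓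
      (⨅ i, pointIdeal (p i) ^ m i).restrictScalars K :=
    ⟨hF, Ideal.mem_iInf.mpr hFp⟩
  rwa [hbot] at hmem

open Classical in
/-- Seven double points in `ℙ⁴` would impose independent conditions on cubics only if no cubic
were singular at all of them; but the hyperplane through five of them, together with a quadric
cone over these five whose vertex is the line joining the other two, is such a cubic. -/
lemma not_separatesJets_two_three [Fintype ι] {p : ι → Fin 5 → K} (hp : ∀ i, p i ≠ 0)
    (hι : Fintype.card ι = 7) {l : Module.Dual K (Fin 5 → K)} (hl : l ≠ 0) {x y : ι}
    (hxy : LinearIndependent K ![p x, p y]) (hlp : ∀ i, i ≠ x → i ≠ y → l (p i) = 0) :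
    ¬ SeparatesJets p (fun _ => 2) 3 := by
  intro h
  obtain ⟨B, hB, hker⟩ := exists_surjective_ker_eq (N := 5) (M := 3)
    (by rw [finrank_span_range_pair hxy])
  have hBxy (i : Fin 2) : B (![p x, p y] i) = 0 := by
    rw [← LinearMap.mem_ker, hker]
    exact Submodule.subset_span ⟨i, rfl⟩
  have hne := index_ne_of_linearIndependent_pair hxy
  obtain ⟨F, hF, hF₀, hFp⟩ := exists_isHomogeneous_eval_eq_zero (t := 2)
    (fun i : ({x, y}ᶜ : Finset ι) => B (p i)) (by
      rw [Fintype.card_coe, Finset.card_compl, Finset.card_pair hne, hι]; decide)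
  refine mul_ne_zero (linForm_ne_zero hl) ((map_ne_zero_iff _ (linSubst_injective hB)).mpr hF₀) <|
    h.eq_zero_of_sum_choose_eq (n := 4) hp (fun _ => Nat.two_pos) (fun _ => by lia)
      (by simp [hι, Nat.choose])
      ((isHomogeneous_linForm l).mul (isHomogeneous_linSubst B hF)) fun i => ?_
  by_cases hi : i = x ∨ i = y
  · have hBi : B (p i) = 0 := by
      rcases hi with rfl | rfl
      exacts [hBxy 0, hBxy 1]
    exact Ideal.mul_mem_left _ _ (linSubst_mem_pointIdeal_pow_of_apply_eq_zero hBi hF)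
  · push Not at hi
    rw [pow_two]
    refine Ideal.mul_mem_mul (linForm_mem_pointIdeal (hlp i hi.1 hi.2)) ?_
    refine mem_pointIdeal_of_eval_eq_zero (hp i) (isHomogeneous_linSubst B hF) ?_
    rw [eval_linSubst]
    exact hFp ⟨i, by simpa using hi⟩

end LinearSections

/-! ### The Segre bound is a lower bound -/

section LowerBound

variable {K : Type} [Field K]

lemma two_mul_le_of_four_mul_choose_two_le {m t : ℕ} (hm : 0 < m) (hmt : 2 * m ≤ t + 1)
    (h : 4 * (m + 2 - 1).choose 2 ≤ (t + 2).choose 2) : 2 * m ≤ t := by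
  by_contra! hlt
  obtain ⟨k, rfl⟩ : ∃ k, m = k + 1 := ⟨m - 1, by lia⟩
  obtain rfl : t = 2 * k + 1 := by lia
  have hleft := Nat.add_one_mul_choose_eq (k + 1) 1
  have hright := Nat.add_one_mul_choose_eq (2 * k + 2) 1
  simp only [Nat.choose_one_right, Nat.reduceAdd] at hleft hright
  rw [show k + 1 + 2 - 1 = k + 1 + 1 by lia, show 2 * k + 1 + 2 = 2 * k + 2 + 1 by lia] at h
  nlinarith

lemma mul_le_mul_add_one_of_two_mul_le {m n s t : ℕ} (hmt : 2 * m ≤ t + 1)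
    (h : m * s + n ≤ 2 * m * n + 1) : m * s ≤ n * t + 1 := by
  nlinarith [Nat.mul_le_mul_right n hmt]

section Spanning

variable {ι : Type*} [Fintype ι] {n m t : ℕ}

open Classical in
lemma SeparatesJets.mul_add_four_le_of_dual {d : ℕ} {p : ι → Fin (d + 2) → K}
    (h : SeparatesJets p (fun _ => m) t) (hm : 2 ≤ m) (hmt : 2 * m ≤ t + 1)
    (hp : ∀ i, p i ≠ 0) (hι : Fintype.card ι = d + 4) (hd : 0 < d) (hd₃ : d ≤ 3)
    {l : Module.Dual K (Fin (d + 2) → K)} (hl : l ≠ 0) {x y : ι}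
    (hxy : LinearIndependent K ![p x, p y]) (hlp : ∀ i, i ≠ x → i ≠ y → l (p i) = 0) :
    m * (d + 4) ≤ (d + 1) * t + 1 := by
  have hker : Module.finrank K (LinearMap.ker l) = d + 1 := by
    simpa using Module.Dual.finrank_ker_add_one_of_ne_zero hl
  have hcard : ({x, y}ᶜ : Finset ι).card = d + 2 := by
    rw [Finset.card_compl, Finset.card_pair (index_ne_of_linearIndependent_pair hxy), hι]
    rfl
  have hplane : (d + 2) * (m + d - 1).choose d ≤ (t + d).choose d :=
    hcard ▸ h.card_mul_choose_le (by lia) (by lia) hp hker fun i hi =>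
      hlp i (by simp_all) (by simp_all)
  obtain rfl | rfl | rfl : d = 1 ∨ d = 2 ∨ d = 3 := by lia
  · simp only [Nat.choose_one_right] at hplane
    lia
  · have := two_mul_le_of_four_mul_choose_two_le (by lia) hmt hplane
    lia
  · have hne : ¬ (m = 2 ∧ t = 3) := by
      rintro ⟨rfl, rfl⟩
      exact not_separatesJets_two_three hp hι hl hxy hlp h
    lia

lemma SeparatesJets.mul_card_le {p : ι → Fin (n + 1) → K}
    (h : SeparatesJets p (fun _ => m) t) (hm : 0 < m) (hmt : m ≤ t + 1) (hp : ∀ i, p i ≠ 0)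
    (hpair : ∀ i j, i ≠ j → LinearIndependent K ![p i, p j])
    (hspan : Submodule.span K (Set.range p) = ⊤) (hn : 0 < n) (hι : Fintype.card ι ≤ n + 3) :
    m * Fintype.card ι ≤ n * t + 1 := by
  have hrel := finrank_relations hspan
  have hdim : Fintype.card ι * (m + n - 1).choose n ≤ (t + n).choose n := by
    simpa using h.sum_choose_le hp (fun _ => hm) fun _ => hmt
  have hline : 2 * m ≤ t + 1 := by
    obtain ⟨x, y, hxy⟩ := Fintype.exists_pair_of_one_lt_card (α := ι) (by lia)
    exact h.two_mul_le hm hmt hp (hpair x y hxy)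
  obtain rfl | hn₂ : n = 1 ∨ 2 ≤ n := by lia
  · simp only [Nat.add_sub_cancel, Nat.choose_one_right] at hdim
    lia
  obtain rfl | hm₂ : m = 1 ∨ 2 ≤ m := by lia
  · rcases (show t = 1 ∨ 2 ≤ t by lia) with rfl | ht
    · rw [Nat.add_sub_cancel_left, Nat.choose_self, add_comm 1 n,
        Nat.choose_succ_self_right] at hdim
      lia
    · nlinarith [Nat.mul_le_mul_left n ht]
  by_cases hlarge : 2 * Fintype.card ι ≤ 3 * n + 1
  · refine mul_le_mul_add_one_of_two_mul_le hline ?_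
    obtain ⟨k, rfl⟩ := Nat.exists_eq_add_of_le hm₂
    obtain ⟨l, rfl⟩ := Nat.exists_eq_add_of_le hn
    nlinarith [Nat.mul_le_mul_left k hlarge]
  · obtain ⟨hι₂, rfl⟩ | hι₃ : Fintype.card ι = 4 ∧ n = 2 ∨ Fintype.card ι = n + 3 := by lia
    · have := two_mul_le_of_four_mul_choose_two_le hm hline (hι₂ ▸ hdim)
      lia
    · obtain ⟨d, rfl⟩ : ∃ d, n = d + 1 := ⟨n - 1, by lia⟩
      rw [hι₃]
      rcases h.mul_add_four_le_or_exists_dual hm (by lia) hspan hι₃ with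
        hle | ⟨l, hl, x, y, hxy, hlp⟩
      · exact hle
      · exact h.mul_add_four_le_of_dual hm₂ hline hp hι₃ (by lia) (by lia) hl
          (hpair x y hxy) hlp

end Spanning

section Subspaces

variable {n s m t : ℕ} {p : Fin s → Fin (n + 1) → K}

lemma add_card_le_of_span_eq_top {ι : Type*} [Fintype ι] {p : ι → Fin n → K} {Q : Finset ι}
    (hspan : Submodule.span K (Set.range p) = ⊤) :
    n + Q.card ≤ Module.finrank K (Submodule.span K (p '' Q)) + Fintype.card ι := by
  classical
  have hsup : (⊤ : Submodule K (Fin n → K)) ≤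
      Submodule.span K (p '' Q) ⊔ Submodule.span K (p '' (Qᶜ : Finset ι)) := by
    rw [← hspan, ← Submodule.span_union, ← Set.image_union, Finset.coe_compl, Set.union_compl_self,
      Set.image_univ]
  have hcompl : Module.finrank K (Submodule.span K (p '' (Qᶜ : Finset ι))) ≤ Qᶜ.card := by
    rw [← Finset.coe_image]
    exact (finrank_span_finset_le_card _).trans Finset.card_image_le
  have hadd := Submodule.finrank_add_le_finrank_add_finrank (Submodule.span K (p '' Q))
    (Submodule.span K (p '' (Qᶜ : Finset ι)))
  have hfin := Submodule.finrank_mono hsup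
  have hQ := Q.card_le_univ
  rw [finrank_top, Module.finrank_fin_fun] at hfin
  rw [Finset.card_compl] at hcompl
  lia

lemma SeparatesJets.mul_card_le_of_finrank_span {k : ℕ} {Q : Finset (Fin s)}
    (h : SeparatesJets p (fun _ => m) t) (hm : 0 < m) (hmt : m ≤ t + 1) (hp : ProjDistinct p)
    (hk : 0 < k) (hV : Module.finrank K (Submodule.span K (p '' Q)) = k + 1)
    (hQ : Q.card ≤ k + 3) : m * Q.card ≤ k * t + 1 := by
  obtain ⟨A, hA, hrange⟩ := exists_injective_range_eq hV
  have hmem (i : Q) : p i ∈ LinearMap.range A :=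
    hrange ▸ Submodule.subset_span ⟨i, i.2, rfl⟩
  choose q hq using hmem
  have hq₀ (i) : q i ≠ 0 := fun h0 => hp.1 i (by rw [← hq, h0, map_zero])
  have hpair (i j : Q) (hij : i ≠ j) : LinearIndependent K ![q i, q j] := by
    refine .of_comp A ?_
    convert hp.linearIndependent_pair (Subtype.coe_ne_coe.mpr hij) using 1
    ext i
    fin_cases i <;> simp [hq]
  have hspan : Submodule.span K (Set.range q) = ⊤ := by
    apply Submodule.map_injective_of_injective hA
    rw [Submodule.map_span, ← Set.range_comp, Submodule.map_top, hrange, Set.image_eq_range]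
    exact congrArg _ (congrArg _ (funext hq))
  simpa using (h.of_injective hA Subtype.val_injective hq).mul_card_le hm hmt hq₀ hpair hspan hk
    (by simpa using hQ)

lemma SeparatesJets.segreBound_le (h : SeparatesJets p (fun _ => m) t) (hm : 0 < m)
    (hmt : m ≤ t + 1) (hp : ProjDistinct p) (hspan : Submodule.span K (Set.range p) = ⊤)
    (hs : s ≤ n + 3) : segreBound n p (fun _ => m) ≤ t := by
  refine segreBound_le_iff.mpr fun j hj Q hQ ⟨W, hW, hQW⟩ => ?_
  obtain ⟨hj₁, -⟩ := Finset.mem_Icc.mp hj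
  rw [Finset.sum_const, smul_eq_mul, mul_comm]
  obtain hQ₁ | hQ₂ := (Finset.one_le_card.mpr hQ).eq_or_lt
  · rw [← hQ₁]
    nlinarith
  obtain ⟨x, hx, y, hy, hxy⟩ := Finset.one_lt_card.mp hQ₂
  have hmem {i} (hi : i ∈ Q) : p i ∈ Submodule.span K (p '' Q) :=
    Submodule.subset_span ⟨i, hi, rfl⟩
  have hVW := Submodule.finrank_mono <| Submodule.span_le.mpr <| Set.image_subset_iff.mpr hQW
  have hV₂ := two_le_finrank_of_mem (hp.linearIndependent_pair hxy) (hmem hx) (hmem hy)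
  obtain ⟨k, hk⟩ := Nat.exists_eq_add_of_le' (one_le_two.trans hV₂)
  have hcard := add_card_le_of_span_eq_top (Q := Q) hspan
  rw [Fintype.card_fin] at hcard
  calc m * Q.card ≤ k * t + 1 :=
        h.mul_card_le_of_finrank_span hm hmt hp (by lia) hk (by lia)
    _ ≤ j * t + 1 := by
        gcongr
        lia

end Subspaces

end LowerBound

/-! ### The regularity index -/

section Main

variable {K : Type} [Field K] {n s m : ℕ}

lemma hilbFn_zero_right {I : Ideal (MvPolynomial (Fin (n + 1)) K)} (hI : I ≠ ⊤) :
    hilbFn K I 0 = 1 := by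
  have hbot : homogeneousSubmodule (Fin (n + 1)) K 0 ⊓ I.restrictScalars K = ⊥ := by
    refine (Submodule.eq_bot_iff _).mpr fun F ⟨hF, hFI⟩ => ?_
    obtain ⟨c, rfl⟩ : ∃ c, F = C c :=
      ⟨_, totalDegree_eq_zero_iff_eq_C.mp (Nat.le_zero.mp (IsHomogeneous.totalDegree_le hF))⟩
    by_contra hne
    have hc : IsUnit c := isUnit_iff_ne_zero.mpr fun h0 => hne (by rw [h0, map_zero])
    exact hI (Ideal.eq_top_of_isUnit_mem _ hFI (hc.map C))
  rw [hilbFn, gradedDim, hbot, finrank_bot, finrank_homogeneousSubmodule, zero_add,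
    Nat.choose_self]

lemma fatIdeal_ne_top {N : ℕ} {p : Fin s → Fin N → K} {m : Fin s → ℕ} {i : Fin s}
    (hm : m i ≠ 0) : fatIdeal p m ≠ ⊤ := by
  have hker : fatIdeal p m ≤ RingHom.ker (eval (p i)) :=
    (iInf_le _ i).trans <| (Ideal.pow_le_self hm).trans <| Ideal.span_le.mpr fun _ hf => hf.2
  exact ne_top_of_le_ne_top (RingHom.ker_ne_top _) hker

lemma regFat_zero {p : Fin s → Fin (0 + 1) → K} (hm : 0 < m) (hp : ProjDistinct p)
    (hspan : Submodule.span K (Set.range p) = ⊤) : regFat K p (fun _ => m) = 0 := by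
  have hs : s ≤ 1 := by
    by_contra! hs
    have := two_le_finrank_of_mem
      (hp.linearIndependent_pair (x := ⟨0, by lia⟩) (y := ⟨1, hs⟩) (by simp))
      (Submodule.mem_top (R := K)) Submodule.mem_top
    simp at this
  have hrel := finrank_relations hspan
  rw [Fintype.card_fin] at hrel
  obtain rfl : s = 1 := by lia
  have hI : fatIdeal p (fun _ => m) ≠ ⊤ := fatIdeal_ne_top (i := 0) hm.ne'
  refine Nat.sInf_eq_zero.mpr (.inl ?_)
  simpa [fatMult] using hilbFn_zero_right hI

lemma hilbFn_segreBound (hn : 0 < n) (hs : s ≤ n + 3) {m : Fin s → ℕ} (hm : ∀ i, 0 < m i)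
    {p : Fin s → Fin (n + 1) → K} (hp : ProjDistinct p)
    (hspan : Submodule.span K (Set.range p) = ⊤) :
    hilbFn K (fatIdeal p m) (segreBound n p m) = fatMult n m :=
  (hilbFn_fatIdeal_eq_fatMult_iff hn hp.1 hm).mpr (separatesJets_segreBound hn hs hp hspan hm)

lemma segreBound_le_of_hilbFn_eq (hn : 0 < n) (hs : s ≤ n + 3) (hm : 0 < m)
    {p : Fin s → Fin (n + 1) → K} (hp : ProjDistinct p)
    (hspan : Submodule.span K (Set.range p) = ⊤) {t : ℕ}
    (ht : hilbFn K (fatIdeal p fun _ => m) t = fatMult n fun _ : Fin s => m) :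
    segreBound n p (fun _ => m) ≤ t := by
  obtain ⟨hmt, hsep⟩ := (hilbFn_fatIdeal_eq_fatMult_iff hn hp.1 fun _ => hm).mp ht
  have hrel := finrank_relations hspan
  rw [Fintype.card_fin] at hrel
  exact hsep.segreBound_le hm (hmt ⟨0, by lia⟩) hp hspan hs

end Main

theorem stmt11_general {K : Type} [Field K] {n s : ℕ} (hs : s ≤ n + 3)
    (m : ℕ) (hm : 0 < m)
    (p : Fin s → Fin (n + 1) → K) (hdist : ProjDistinct p)
    (hspan : Submodule.span K (Set.range p) = ⊤) :
    regFat K p (fun _ => m) = segreBound n p (fun _ => m) := by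
  rcases Nat.eq_zero_or_pos n with rfl | hn
  · rw [regFat_zero hm hdist hspan]
    simp [segreBound]
  · have hmin := hilbFn_segreBound hn hs (fun _ => hm) hdist hspan
    refine le_antisymm (Nat.sInf_le hmin) (segreBound_le_of_hilbFn_eq hn hs hm hdist hspan ?_)
    exact Nat.sInf_mem (s := {t | hilbFn K _ t = _}) ⟨_, hmin⟩

/-- Theorem 4.3: `s ≤ n+3` non-degenerate equimultiple fat points in `ℙⁿ`
satisfy `reg(Z) = T(Z)`. -/
theorem stmt11 {K : Type} [Field K] [IsAlgClosed K] {n s : ℕ} (hs : s ≤ n + 3)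
    (m : ℕ) (hm : 0 < m)
    (p : Fin s → Fin (n + 1) → K) (hdist : ProjDistinct p)
    (hspan : Submodule.span K (Set.range p) = ⊤) :
    regFat K p (fun _ => m) = segreBound n p (fun _ => m) :=
  stmt11_general hs m hm p hdist hspan
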